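/- arXiv:1410.5535 — 9 statements merged into one kernel-verified Lean document; each statement's English description precedes it below -/
import Mathlib

section
/- Let n ≥ 2 be an integer and let m be a real number with 0 ≤ m ≤ n/2. Then there exists a constant C > 0 (depending only on n and m) such that for every ε ∈ (0,1): if m < n/2 then ∫_{B_{ε^{-1}}(0)} (τ² + |z|⁴)^m / (τ² + (1+|z|²)²)^{n+1} dz dτ ≤ C + C ε^{2n−4m}, and if m = n/2 then ∫_{B_{ε^{-1}}(0)} (τ² + |z|⁴)^m / (τ² + (1+|z|²)²)^{n+1} dz dτ ≤ C + C log(1/ε). -/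
open MeasureTheory Real Set

/-- `normSq z = |z|²` for `z ∈ ℂⁿ`. -/
noncomputable def normSq {n : ℕ} (z : Fin n → ℂ) : ℝ := ∑ i, ‖z i‖ ^ 2

/-- The gauge ball `{(z,τ) : (|z|⁴ + τ²)^(1/4) ≤ R}` in the Heisenberg group `ℂⁿ × ℝ`. -/
noncomputable def gaugeBall (n : ℕ) (R : ℝ) : Set ((Fin n → ℂ) × ℝ) :=
  {p | (normSq p.1 ^ 2 + p.2 ^ 2) ^ ((1 : ℝ) / 4) ≤ R}


/-!
Since `τ² + |z|⁴ ≤ B := τ² + (1 + |z|²)²`, the integrand is at most `B ^ (m - (n + 1))`. Under the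
dilations `(δ z, δ² τ)`, `B` grows like the fourth power of the gauge, and `ℂⁿ × ℝ` has homogeneous
dimension `2 n + 2`, so this power is integrable on the whole space as soon as
`2 n + 2 < 4 (n + 1 - m)`, that is, `m < (n + 1) / 2`. Hence the integrals over the gauge balls stay
bounded throughout the range `m ≤ n / 2`.
-/

lemma normSq_nonneg {n : ℕ} (z : Fin n → ℂ) : 0 ≤ normSq z :=
  Finset.sum_nonneg fun _ _ => sq_nonneg _

@[fun_prop]
lemma continuous_normSq {n : ℕ} : Continuous (normSq : (Fin n → ℂ) → ℝ) := by
  unfold normSq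
  fun_prop

lemma sq_norm_le_normSq {n : ℕ} (z : Fin n → ℂ) : ‖z‖ ^ 2 ≤ normSq z := by
  refine (Real.le_sqrt (norm_nonneg z) (normSq_nonneg z)).mp ?_
  refine (pi_norm_le_iff_of_nonneg (Real.sqrt_nonneg _)).mpr fun i => Real.le_sqrt_of_sq_le ?_
  exact Finset.single_le_sum (f := fun i => ‖z i‖ ^ 2) (fun _ _ => sq_nonneg _) (Finset.mem_univ i)

lemma rpow_neg_add_le_mul_rpow_neg {x y b r s : ℝ} (hx : 0 < x) (hy : 0 < y) (hxb : x ≤ b)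
    (hyb : y ≤ b) (hr : 0 ≤ r) (hs : 0 ≤ s) : b ^ (-(r + s)) ≤ x ^ (-r) * y ^ (-s) := by
  have hb : 0 < b := hx.trans_le hxb
  rw [neg_add, rpow_add hb]
  exact mul_le_mul (rpow_le_rpow_of_nonpos hx hxb (neg_nonpos.mpr hr))
    (rpow_le_rpow_of_nonpos hy hyb (neg_nonpos.mpr hs)) (by positivity) (by positivity)

/- `finrank ℝ E + 2 * finrank ℝ F` is the homogeneous dimension of `E × F` under the dilations
`(δ x, δ² y)`. -/
lemma integrable_rpow_neg_norm_sq_add_sq_one_add_norm_sq {E F : Type*}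
    [NormedAddCommGroup E] [NormedSpace ℝ E] [FiniteDimensional ℝ E] [MeasurableSpace E]
    [BorelSpace E] [NormedAddCommGroup F] [NormedSpace ℝ F] [FiniteDimensional ℝ F]
    [MeasurableSpace F] [BorelSpace F] (μ : Measure E) [μ.IsAddHaarMeasure] (ν : Measure F)
    [ν.IsAddHaarMeasure] {s : ℝ}
    (hs : (Module.finrank ℝ E : ℝ) + 2 * Module.finrank ℝ F < 4 * s) :
    Integrable (fun p : E × F => (‖p.2‖ ^ 2 + (1 + ‖p.1‖ ^ 2) ^ 2) ^ (-s)) (μ.prod ν) := by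
  obtain ⟨a, b, ha, hb, rfl⟩ : ∃ a b : ℝ,
      (Module.finrank ℝ E : ℝ) < 4 * a ∧ (Module.finrank ℝ F : ℝ) < 2 * b ∧ a + b = s :=
    ⟨s / 2 + Module.finrank ℝ E / 8 - Module.finrank ℝ F / 4,
      s / 2 - Module.finrank ℝ E / 8 + Module.finrank ℝ F / 4,
      by linarith, by linarith, by ring⟩
  have ha₀ : 0 ≤ a := by linarith [(Module.finrank ℝ E).cast_nonneg (α := ℝ)]
  have hb₀ : 0 ≤ b := by linarith [(Module.finrank ℝ F).cast_nonneg (α := ℝ)]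
  refine ((integrable_rpow_neg_one_add_norm_sq (μ := μ) ha).mul_prod
    (integrable_rpow_neg_one_add_norm_sq (μ := ν) hb)).mono' ?_ (.of_forall fun ⟨x, y⟩ => ?_)
  · exact (Continuous.rpow_const (by fun_prop) fun p => .inl (by positivity)).aestronglyMeasurable
  have hpow : ((1 + ‖x‖ ^ 2) ^ 2) ^ (-a) = (1 + ‖x‖ ^ 2) ^ (-(4 * a) / 2) := by
    rw [← rpow_natCast_mul (by positivity)]
    congr 1
    push_cast
    ring
  have hprod : (‖y‖ ^ 2 + (1 + ‖x‖ ^ 2) ^ 2) ^ (-(a + b)) ≤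
      ((1 + ‖x‖ ^ 2) ^ 2) ^ (-a) * (1 + ‖y‖ ^ 2) ^ (-b) :=
    rpow_neg_add_le_mul_rpow_neg (by positivity) (by positivity)
      (by linarith [sq_nonneg ‖y‖]) (by nlinarith [sq_nonneg ‖x‖]) ha₀ hb₀
  rw [norm_of_nonneg (by positivity), ← hpow, neg_div, mul_div_cancel_left₀ b two_ne_zero]
  exact hprod

lemma rpow_sq_add_sq_div_pow_le {t v w m : ℝ} {k : ℕ} (hv : 0 ≤ v) (hvw : v ≤ w) (hm : 0 ≤ m)
    (hmk : m ≤ k) :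
    (t ^ 2 + w ^ 2) ^ m / (t ^ 2 + (1 + w) ^ 2) ^ k ≤ (t ^ 2 + (1 + v) ^ 2) ^ (-(k - m)) := by
  have hw : 0 ≤ w := hv.trans hvw
  have hpos : 0 < t ^ 2 + (1 + w) ^ 2 := by positivity
  calc (t ^ 2 + w ^ 2) ^ m / (t ^ 2 + (1 + w) ^ 2) ^ k
      ≤ (t ^ 2 + (1 + w) ^ 2) ^ m / (t ^ 2 + (1 + w) ^ 2) ^ k := by gcongr; linarith
    _ = (t ^ 2 + (1 + w) ^ 2) ^ (-(k - m)) := by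
      rw [neg_sub, rpow_sub hpos, rpow_natCast]
    _ ≤ (t ^ 2 + (1 + v) ^ 2) ^ (-(k - m)) :=
      rpow_le_rpow_of_nonpos (by positivity) (by gcongr) (by linarith)

lemma integrable_rpow_sq_add_normSq_sq_div_pow {n k : ℕ} {m : ℝ} (hm : 0 ≤ m)
    (hmk : m + ((n : ℝ) + 1) / 2 < k) :
    Integrable fun p : (Fin n → ℂ) × ℝ =>
      (p.2 ^ 2 + normSq p.1 ^ 2) ^ m / (p.2 ^ 2 + (1 + normSq p.1) ^ 2) ^ k := by
  have hdim : (Module.finrank ℝ (Fin n → ℂ) : ℝ) + 2 * Module.finrank ℝ ℝ < 4 * (k - m) := by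
    rw [finrank_real_of_complex, Module.finrank_fin_fun, Module.finrank_self]
    push_cast
    linarith
  refine (integrable_rpow_neg_norm_sq_add_sq_one_add_norm_sq volume volume hdim).mono' ?_
    (.of_forall fun ⟨z, t⟩ => ?_)
  · refine (Continuous.div (.rpow_const (by fun_prop) fun _ => .inr hm) (by fun_prop)
      fun p => ?_).aestronglyMeasurable
    have := normSq_nonneg p.1
    positivity
  · have hbound := rpow_sq_add_sq_div_pow_le (t := t) (k := k) (sq_nonneg ‖z‖)
      (sq_norm_le_normSq z) hm (by linarith [n.cast_nonneg (α := ℝ)])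
    rwa [norm_of_nonneg (by positivity), norm_eq_abs, sq_abs]

theorem stmt_0_general (n : ℕ) {m : ℝ} (hm₀ : 0 ≤ m) (hm : m < ((n : ℝ) + 1) / 2) :
    ∃ C : ℝ, 0 < C ∧ ∀ S : Set ((Fin n → ℂ) × ℝ),
      IntegrableOn (fun p => (p.2 ^ 2 + normSq p.1 ^ 2) ^ m /
        (p.2 ^ 2 + (1 + normSq p.1) ^ 2) ^ (n + 1)) S ∧
      (∫ p in S, (p.2 ^ 2 + normSq p.1 ^ 2) ^ m /
        (p.2 ^ 2 + (1 + normSq p.1) ^ 2) ^ (n + 1)) ≤ C := by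
  have hint := integrable_rpow_sq_add_normSq_sq_div_pow (n := n) (k := n + 1) hm₀
    (by push_cast; linarith)
  have hnonneg : ∀ p : (Fin n → ℂ) × ℝ, 0 ≤ (p.2 ^ 2 + normSq p.1 ^ 2) ^ m /
      (p.2 ^ 2 + (1 + normSq p.1) ^ 2) ^ (n + 1) := fun p => by positivity
  exact ⟨_, add_pos_of_nonneg_of_pos (integral_nonneg hnonneg) one_pos, fun S =>
    ⟨hint.integrableOn, le_add_of_le_of_nonneg
      (setIntegral_le_integral hint (.of_forall hnonneg)) zero_le_one⟩⟩

theorem stmt_0 (n : ℕ) (hn : 2 ≤ n) (m : ℝ) (hm0 : 0 ≤ m) (hm1 : m ≤ (n : ℝ) / 2) :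
    ∃ C : ℝ, 0 < C ∧ ∀ ε : ℝ, ε ∈ Ioo (0 : ℝ) 1 →
      (m < (n : ℝ) / 2 →
        (∫ p in gaugeBall n ε⁻¹,
            (p.2 ^ 2 + normSq p.1 ^ 2) ^ m /
              (p.2 ^ 2 + (1 + normSq p.1) ^ 2) ^ (n + 1)) ≤
          C + C * ε ^ (2 * (n : ℝ) - 4 * m)) ∧
      (m = (n : ℝ) / 2 →
        (∫ p in gaugeBall n ε⁻¹,
            (p.2 ^ 2 + normSq p.1 ^ 2) ^ m /
              (p.2 ^ 2 + (1 + normSq p.1) ^ 2) ^ (n + 1)) ≤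
          C + C * Real.log (1 / ε)) := by
  obtain ⟨C, hC, hle⟩ := stmt_0_general n hm0 (by linarith)
  exact ⟨C, hC, fun ε hε => ⟨
    fun _ => le_add_of_le_of_nonneg (hle _).2 (mul_nonneg hC.le (rpow_nonneg hε.1.le _)),
    fun _ => le_add_of_le_of_nonneg (hle _).2
      (mul_nonneg hC.le (log_nonneg (one_le_one_div hε.1 hε.2.le)))⟩⟩
end

section
/- Let n ≥ 2 be an integer. Then the function (z,τ) ↦ (|z|⁴ + τ² − 1)|z|² / (τ² + (1+|z|²)²)^{n+2} is integrable on ℂ^n × ℝ and ∫_{ℂ^n×ℝ} (|z|⁴ + τ² − 1)|z|² / (τ² + (1+|z|²)²)^{n+2} dz dτ > 0. In particular the constant A₂ = (1/(2n)) ∫_{ℂ^n×ℝ} 4^n (|z|⁴ + τ² − 1)|z|² / (τ² + (1+|z|²)²)^{n+2} dz dτ is positive. -/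
open MeasureTheory Real Set

/-!
Since `|z|⁴ + τ² - 1 = D - 2 a` for `a = 1 + |z|²` and `D = τ² + a²`, the integrand is
`|z|² / D ^ (n + 1) - 2 |z|² a / D ^ (n + 2)`. The substitution `τ = a t` factors the integral of
each term into a radial moment on `ℂⁿ` times one on `ℝ`. A single integration by parts in the radial
variable relates the moments with consecutive exponents, on `ℂⁿ` as well as on `ℝ`, and leaves the
first product of moments times the factor `1 / (n + 1)`.
-/

open Filter Module
open scoped Topology

section HalfLine

lemma pow_div_one_add_sq_pow_le_rpow (k p : ℕ) {r : ℝ} (hr : 0 ≤ r) :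
    r ^ k / (1 + r ^ 2) ^ p ≤ (1 + r ^ 2) ^ (-(2 * p - k : ℝ) / 2) := by
  have hpos : 0 < 1 + r ^ 2 := by positivity
  calc r ^ k / (1 + r ^ 2) ^ p ≤ ((1 + r ^ 2) ^ (1 / 2 : ℝ)) ^ k / (1 + r ^ 2) ^ p := by
        gcongr
        rw [← sqrt_eq_rpow]
        exact le_sqrt_of_sq_le (by linarith)
    _ = (1 + r ^ 2) ^ (-(2 * p - k : ℝ) / 2) := by
        rw [← rpow_mul_natCast hpos.le, ← rpow_natCast _ p, ← rpow_sub hpos]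
        ring_nf

lemma tendsto_pow_div_one_add_sq_pow_atTop {k p : ℕ} (h : k < 2 * p) :
    Tendsto (fun r : ℝ ↦ r ^ k / (1 + r ^ 2) ^ p) atTop (𝓝 0) := by
  have hexp : 0 < (2 * p - k : ℝ) / 2 := by
    have : (k : ℝ) < 2 * p := mod_cast h
    linarith
  have hbase : Tendsto (fun r : ℝ ↦ 1 + r ^ 2) atTop atTop :=
    tendsto_atTop_add_const_left _ _ (tendsto_pow_atTop two_ne_zero)
  refine squeeze_zero' ?_ ?_ ((tendsto_rpow_neg_atTop hexp).comp hbase)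
  · filter_upwards [eventually_ge_atTop 0] with r hr using by positivity
  · filter_upwards [eventually_ge_atTop 0] with r hr
    simpa only [Function.comp_apply, neg_div] using pow_div_one_add_sq_pow_le_rpow k p hr

lemma hasDerivAt_pow_succ_div_one_add_sq_pow (k p : ℕ) (r : ℝ) :
    HasDerivAt (fun r : ℝ ↦ r ^ (k + 1) / (1 + r ^ 2) ^ p)
      (2 * p * (r ^ k / (1 + r ^ 2) ^ (p + 1))
        - (2 * p - (k + 1)) * (r ^ k / (1 + r ^ 2) ^ p)) r := by
  have hden : HasDerivAt (fun r : ℝ ↦ (1 + r ^ 2) ^ p) (p * (1 + r ^ 2) ^ (p - 1) * (2 * r)) r := by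
    simpa using ((hasDerivAt_pow 2 r).const_add 1).fun_pow p
  refine ((hasDerivAt_pow (k + 1) r).fun_div hden (by positivity)).congr_deriv ?_
  rcases p with - | p
  · push_cast [Nat.add_sub_cancel]
    ring
  · simp only [Nat.add_sub_cancel]
    field_simp
    push_cast
    ring

end HalfLine

section Moments

/-- The moment `∫ |x|^j / (1 + |x|²)^p` of the radial weights on a normed space; it is used both on
the horizontal layer `ℂⁿ` and on the center `ℝ` of the Heisenberg group. -/
noncomputable def radialMoment {E : Type*} [NormedAddCommGroup E] [MeasurableSpace E]
    (μ : Measure E) (j p : ℕ) : ℝ :=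
  ∫ x, ‖x‖ ^ j / (1 + ‖x‖ ^ 2) ^ p ∂μ

variable {E : Type*} [NormedAddCommGroup E] [NormedSpace ℝ E] [FiniteDimensional ℝ E]
  [MeasurableSpace E] [BorelSpace E] (μ : Measure E) [μ.IsAddHaarMeasure]

lemma integrable_norm_pow_div_one_add_norm_sq_pow {j p : ℕ} (h : j + finrank ℝ E < 2 * p) :
    Integrable (fun x ↦ ‖x‖ ^ j / (1 + ‖x‖ ^ 2) ^ p) μ := by
  have hexp : (finrank ℝ E : ℝ) < 2 * p - j := by
    have : (j + finrank ℝ E : ℝ) < 2 * p := mod_cast h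
    linarith
  refine (integrable_rpow_neg_one_add_norm_sq hexp).mono' ?_ (.of_forall fun x ↦ ?_)
  · exact Measurable.aestronglyMeasurable (by fun_prop)
  · rw [norm_of_nonneg (by positivity)]
    exact pow_div_one_add_sq_pow_le_rpow j p (norm_nonneg x)

lemma integrableOn_Ioi_pow_div_one_add_sq_pow {k p : ℕ} (h : k + 1 < 2 * p) :
    IntegrableOn (fun r : ℝ ↦ r ^ k / (1 + r ^ 2) ^ p) (Ioi 0) := by
  refine (integrable_norm_pow_div_one_add_norm_sq_pow volume
    (by simpa using h)).integrableOn.congr_fun (fun r (hr : 0 < r) ↦ ?_) measurableSet_Ioi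
  simp only [norm_of_nonneg hr.le]

lemma integral_Ioi_pow_div_one_add_sq_pow_succ {k p : ℕ} (h : k + 1 < 2 * p) :
    (2 * p : ℝ) * ∫ r in Ioi (0 : ℝ), r ^ k / (1 + r ^ 2) ^ (p + 1)
      = (2 * p - (k + 1) : ℝ) * ∫ r in Ioi (0 : ℝ), r ^ k / (1 + r ^ 2) ^ p := by
  have hint := (integrableOn_Ioi_pow_div_one_add_sq_pow h).const_mul (2 * p - (k + 1) : ℝ)
  have hint' := (integrableOn_Ioi_pow_div_one_add_sq_pow
    (show k + 1 < 2 * (p + 1) by lia)).const_mul (2 * p : ℝ)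
  have hftc := integral_Ioi_of_hasDerivAt_of_tendsto' (a := 0)
    (fun r _ ↦ hasDerivAt_pow_succ_div_one_add_sq_pow k p r) (hint'.sub hint)
    (tendsto_pow_div_one_add_sq_pow_atTop h)
  rw [integral_sub hint' hint, integral_const_mul, integral_const_mul] at hftc
  simpa [sub_eq_zero] using hftc

variable [Nontrivial E]

lemma radialMoment_pos {j p : ℕ} (h : j + finrank ℝ E < 2 * p) : 0 < radialMoment μ j p := by
  obtain ⟨x, hx⟩ := exists_ne (0 : E)
  have hcont : Continuous fun x : E ↦ ‖x‖ ^ j / (1 + ‖x‖ ^ 2) ^ p := by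
    fun_prop (disch := intros; positivity)
  exact integral_pos_of_integrable_nonneg_nonzero hcont
    (integrable_norm_pow_div_one_add_norm_sq_pow μ h) (fun x ↦ by positivity)
    (x := x) (by positivity)

lemma radialMoment_succ {j p : ℕ} (h : j + finrank ℝ E < 2 * p) :
    2 * p * radialMoment μ j (p + 1) = (2 * p - (j + finrank ℝ E)) * radialMoment μ j p := by
  have hdim : finrank ℝ E - 1 + j + 1 = j + finrank ℝ E := by
    have : 0 < finrank ℝ E := finrank_pos
    lia
  have hpolar (q : ℕ) : radialMoment μ j q = finrank ℝ E * μ.real (Metric.ball 0 1) *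
      ∫ r in Ioi (0 : ℝ), r ^ (finrank ℝ E - 1 + j) / (1 + r ^ 2) ^ q := by
    simp only [radialMoment, integral_fun_norm_addHaar μ fun r ↦ r ^ j / (1 + r ^ 2) ^ q,
      nsmul_eq_mul, smul_eq_mul, pow_add, mul_div_assoc, mul_assoc]
  have hrec := integral_Ioi_pow_div_one_add_sq_pow_succ (hdim.trans_lt h)
  rw [← Nat.cast_add_one, hdim] at hrec
  rw [hpolar, hpolar, mul_left_comm, hrec, Nat.cast_add, mul_left_comm]

end Moments

section Weights

variable {E : Type*} [NormedAddCommGroup E]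

/-- The functions `|x|^i a^j / (t² + a²)^k` on `E × ℝ`, where `a = 1 + |x|²`. On `E = ℂⁿ` the
quantity `t² + a² = |1 + |x|² + i t|²` is the one whose powers are the extremals of the
Folland–Stein inequality. -/
noncomputable def follandSteinWeight (i j k : ℕ) (p : E × ℝ) : ℝ :=
  ‖p.1‖ ^ i * (1 + ‖p.1‖ ^ 2) ^ j / (p.2 ^ 2 + (1 + ‖p.1‖ ^ 2) ^ 2) ^ k

lemma follandSteinWeight_nonneg (i j k : ℕ) (p : E × ℝ) : 0 ≤ follandSteinWeight i j k p := by
  unfold follandSteinWeight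
  positivity

lemma continuous_follandSteinWeight (i j k : ℕ) :
    Continuous (follandSteinWeight i j k : E × ℝ → ℝ) := by
  unfold follandSteinWeight
  fun_prop (disch := intros; positivity)

lemma follandSteinWeight_eq_mul_comp_div (i j k : ℕ) (x : E) (t : ℝ) :
    follandSteinWeight i j k (x, t) = ‖x‖ ^ i * (1 + ‖x‖ ^ 2) ^ j / ((1 + ‖x‖ ^ 2) ^ 2) ^ k *
      (‖t / (1 + ‖x‖ ^ 2)‖ ^ 0 / (1 + ‖t / (1 + ‖x‖ ^ 2)‖ ^ 2) ^ k) := by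
  have hscale : t ^ 2 + (1 + ‖x‖ ^ 2) ^ 2
      = (1 + ‖x‖ ^ 2) ^ 2 * (1 + (t / (1 + ‖x‖ ^ 2)) ^ 2) := by
    field_simp
    ring
  rw [follandSteinWeight, hscale, mul_pow, pow_zero, norm_eq_abs, sq_abs, div_mul_div_comm, mul_one]

lemma integrable_follandSteinWeight_section (i j : ℕ) {k : ℕ} (hk : 0 < k) (x : E) :
    Integrable fun t : ℝ ↦ follandSteinWeight i j k (x, t) := by
  have ha : 1 + ‖x‖ ^ 2 ≠ 0 := by positivity
  have hmoment : Integrable fun t : ℝ ↦ ‖t‖ ^ 0 / (1 + ‖t‖ ^ 2) ^ k :=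
    integrable_norm_pow_div_one_add_norm_sq_pow volume (by rw [finrank_self]; lia)
  simpa only [follandSteinWeight_eq_mul_comp_div] using (hmoment.comp_div ha).const_mul _

lemma integral_follandSteinWeight_section (i : ℕ) {j k l : ℕ} (hk : 2 * k = j + l + 1) (x : E) :
    ∫ t : ℝ, follandSteinWeight i j k (x, t)
      = ‖x‖ ^ i / (1 + ‖x‖ ^ 2) ^ l * radialMoment (volume : Measure ℝ) 0 k := by
  simp only [follandSteinWeight_eq_mul_comp_div]
  have ha : 0 < 1 + ‖x‖ ^ 2 := by positivity
  rw [integral_const_mul,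
    Measure.integral_comp_div (fun t : ℝ ↦ ‖t‖ ^ 0 / (1 + ‖t‖ ^ 2) ^ k) (1 + ‖x‖ ^ 2),
    abs_of_pos ha, ← pow_mul, hk, smul_eq_mul, ← radialMoment]
  field_simp
  ring

/-- The integrand of `A₂` with the exponent `n + 2` replaced by `m + 2`, as a function of
`s = |z|²` and `t = τ`. -/
noncomputable def heisenbergIntegrand (m : ℕ) (s t : ℝ) : ℝ :=
  (s ^ 2 + t ^ 2 - 1) * s / (t ^ 2 + (1 + s) ^ 2) ^ (m + 2)

lemma heisenbergIntegrand_norm_sq (m : ℕ) (p : E × ℝ) :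
    heisenbergIntegrand m (‖p.1‖ ^ 2) p.2
      = follandSteinWeight 2 0 (m + 1) p - 2 * follandSteinWeight 2 1 (m + 2) p := by
  unfold heisenbergIntegrand follandSteinWeight
  field_simp
  ring

variable [NormedSpace ℝ E] [FiniteDimensional ℝ E] [MeasurableSpace E] [BorelSpace E]
  (μ : Measure E) [μ.IsAddHaarMeasure]

lemma integrable_follandSteinWeight {i j k l : ℕ} (hk : 2 * k = j + l + 1)
    (hl : i + finrank ℝ E < 2 * l) :
    Integrable (follandSteinWeight i j k) (μ.prod (volume : Measure ℝ)) := by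
  rw [integrable_prod_iff (continuous_follandSteinWeight i j k).aestronglyMeasurable]
  refine ⟨.of_forall (integrable_follandSteinWeight_section i j (by lia)), ?_⟩
  simp only [norm_of_nonneg (follandSteinWeight_nonneg _ _ _ _),
    integral_follandSteinWeight_section i hk]
  exact (integrable_norm_pow_div_one_add_norm_sq_pow μ hl).mul_const _

lemma integral_follandSteinWeight {i j k l : ℕ} (hk : 2 * k = j + l + 1)
    (hl : i + finrank ℝ E < 2 * l) :
    ∫ p, follandSteinWeight i j k p ∂μ.prod (volume : Measure ℝ)
      = radialMoment μ i l * radialMoment (volume : Measure ℝ) 0 k := by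
  rw [integral_prod _ (integrable_follandSteinWeight μ hk hl)]
  simp only [integral_follandSteinWeight_section i hk, integral_mul_const, radialMoment]

lemma integrable_heisenbergIntegrand {m : ℕ} (hm : finrank ℝ E < 4 * m) :
    Integrable (fun p ↦ heisenbergIntegrand m (‖p.1‖ ^ 2) p.2) (μ.prod (volume : Measure ℝ)) := by
  simp only [heisenbergIntegrand_norm_sq]
  exact (integrable_follandSteinWeight μ (l := 2 * m + 1) (by lia) (by lia)).sub
    ((integrable_follandSteinWeight μ (l := 2 * m + 2) (by lia) (by lia)).const_mul 2)

lemma integral_heisenbergIntegrand_eq_sub {m : ℕ} (hm : finrank ℝ E < 4 * m) :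
    ∫ p, heisenbergIntegrand m (‖p.1‖ ^ 2) p.2 ∂μ.prod (volume : Measure ℝ)
      = radialMoment μ 2 (2 * m + 1) * radialMoment (volume : Measure ℝ) 0 (m + 1)
        - 2 * (radialMoment μ 2 (2 * m + 2) * radialMoment (volume : Measure ℝ) 0 (m + 2)) := by
  have hl : 2 + finrank ℝ E < 2 * (2 * m + 1) := by lia
  have hl' : 2 + finrank ℝ E < 2 * (2 * m + 2) := by lia
  simp only [heisenbergIntegrand_norm_sq]
  rw [integral_sub (integrable_follandSteinWeight μ (by lia) hl)
      ((integrable_follandSteinWeight μ (by lia) hl').const_mul 2),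
    integral_const_mul, integral_follandSteinWeight μ (by lia) hl,
    integral_follandSteinWeight μ (by lia) hl']

lemma integral_heisenbergIntegrand [Nontrivial E] {m : ℕ} (hm : finrank ℝ E < 4 * m) :
    ∫ p, heisenbergIntegrand m (‖p.1‖ ^ 2) p.2 ∂μ.prod (volume : Measure ℝ)
      = (finrank ℝ E + 2 - 2 * m) / (2 * (m + 1)) *
        (radialMoment μ 2 (2 * m + 1) * radialMoment (volume : Measure ℝ) 0 (m + 1)) := by
  have hhor := radialMoment_succ μ (show 2 + finrank ℝ E < 2 * (2 * m + 1) by lia)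
  have hver := radialMoment_succ (volume : Measure ℝ)
    (show 0 + finrank ℝ ℝ < 2 * (m + 1) by rw [finrank_self]; lia)
  push_cast [finrank_self] at hhor hver
  have hhor' : radialMoment μ 2 (2 * m + 2)
      = (4 * m - finrank ℝ E) / (2 * (2 * m + 1)) * radialMoment μ 2 (2 * m + 1) := by
    field_simp
    linear_combination hhor
  have hver' : radialMoment (volume : Measure ℝ) 0 (m + 2)
      = (2 * m + 1) / (2 * (m + 1)) * radialMoment (volume : Measure ℝ) 0 (m + 1) := by
    field_simp
    linear_combination hver
  rw [integral_heisenbergIntegrand_eq_sub μ hm, hhor', hver']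
  field_simp
  ring

lemma integral_heisenbergIntegrand_pos {m : ℕ} (hm : finrank ℝ E < 4 * m)
    (hm' : 2 * m < finrank ℝ E + 2) :
    0 < ∫ p, heisenbergIntegrand m (‖p.1‖ ^ 2) p.2 ∂μ.prod (volume : Measure ℝ) := by
  have : Nontrivial E := nontrivial_of_finrank_pos (R := ℝ) (by lia)
  have hfactor : 0 < (finrank ℝ E + 2 - 2 * m : ℝ) := by
    rw [sub_pos]
    exact_mod_cast hm'
  have hhor := radialMoment_pos μ (show 2 + finrank ℝ E < 2 * (2 * m + 1) by lia)
  have hver := radialMoment_pos (volume : Measure ℝ)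
    (show 0 + finrank ℝ ℝ < 2 * (m + 1) by rw [finrank_self]; lia)
  rw [integral_heisenbergIntegrand μ hm]
  positivity

end Weights

section EuclideanNorm

lemma norm_toLp_sq_eq_normSq {n : ℕ} (z : Fin n → ℂ) : ‖WithLp.toLp 2 z‖ ^ 2 = normSq z :=
  EuclideanSpace.norm_sq_eq _

/-- Lebesgue measure on `ℂⁿ`, carried over from `Fin n → ℂ`, whose norm is the supremum norm, to the
type that bears the Euclidean norm. -/
noncomputable def euclideanLebesgue (n : ℕ) : Measure (EuclideanSpace ℂ (Fin n)) :=
  Measure.map (MeasurableEquiv.toLp 2 (Fin n → ℂ)) volume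

instance (n : ℕ) : (euclideanLebesgue n).IsAddHaarMeasure :=
  (PiLp.continuousLinearEquiv 2 ℝ fun _ : Fin n ↦ ℂ).symm.isAddHaarMeasure_map volume

lemma finrank_real_euclideanSpace_complex (n : ℕ) :
    finrank ℝ (EuclideanSpace ℂ (Fin n)) = 2 * n := by
  rw [finrank_real_of_complex, finrank_euclideanSpace_fin]

lemma measurePreserving_toLp_prod (n : ℕ) :
    MeasurePreserving ((MeasurableEquiv.toLp 2 (Fin n → ℂ)).prodCongr (.refl ℝ)) volume
      ((euclideanLebesgue n).prod volume) :=
  ((MeasurableEquiv.measurable _).measurePreserving _).prod (.id _)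

lemma integrable_comp_normSq_iff {n : ℕ} {f : ℝ → ℝ → ℝ} :
    Integrable (fun p : (Fin n → ℂ) × ℝ ↦ f (normSq p.1) p.2) ↔
      Integrable (fun p ↦ f (‖p.1‖ ^ 2) p.2) ((euclideanLebesgue n).prod (volume : Measure ℝ)) := by
  simp only [← norm_toLp_sq_eq_normSq]
  exact (measurePreserving_toLp_prod n).integrable_comp_emb
    (MeasurableEquiv.measurableEmbedding _) (g := fun p ↦ f (‖p.1‖ ^ 2) p.2)

lemma integral_comp_normSq {n : ℕ} (f : ℝ → ℝ → ℝ) :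
    ∫ p : (Fin n → ℂ) × ℝ, f (normSq p.1) p.2
      = ∫ p, f (‖p.1‖ ^ 2) p.2 ∂(euclideanLebesgue n).prod (volume : Measure ℝ) := by
  simp only [← norm_toLp_sq_eq_normSq]
  exact (measurePreserving_toLp_prod n).integral_comp (MeasurableEquiv.measurableEmbedding _)
    fun p ↦ f (‖p.1‖ ^ 2) p.2

end EuclideanNorm

theorem stmt_3_general (n m : ℕ) (hnm : n < 2 * m) (hmn : m ≤ n) :
    Integrable (fun p : (Fin n → ℂ) × ℝ =>
      (normSq p.1 ^ 2 + p.2 ^ 2 - 1) * normSq p.1 /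
        (p.2 ^ 2 + (1 + normSq p.1) ^ 2) ^ (m + 2)) ∧
    (0 < ∫ p : (Fin n → ℂ) × ℝ,
        (normSq p.1 ^ 2 + p.2 ^ 2 - 1) * normSq p.1 /
          (p.2 ^ 2 + (1 + normSq p.1) ^ 2) ^ (m + 2)) ∧
    0 < (1 / (2 * (n : ℝ))) * ∫ p : (Fin n → ℂ) × ℝ,
        4 ^ n * ((normSq p.1 ^ 2 + p.2 ^ 2 - 1) * normSq p.1) /
          (p.2 ^ 2 + (1 + normSq p.1) ^ 2) ^ (m + 2) := by
  have hn : 0 < n := by lia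
  have hdim := finrank_real_euclideanSpace_complex n
  have hpos : 0 < ∫ p : (Fin n → ℂ) × ℝ, heisenbergIntegrand m (normSq p.1) p.2 := by
    rw [integral_comp_normSq]
    exact integral_heisenbergIntegrand_pos _ (by rw [hdim]; lia) (by rw [hdim]; lia)
  have hint : Integrable fun p : (Fin n → ℂ) × ℝ ↦ heisenbergIntegrand m (normSq p.1) p.2 :=
    integrable_comp_normSq_iff.2 (integrable_heisenbergIntegrand _ (by rw [hdim]; lia))
  refine ⟨hint, hpos, ?_⟩
  simp only [mul_div_assoc (4 ^ n : ℝ), integral_const_mul]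
  exact mul_pos (by positivity) (mul_pos (by positivity) hpos)

theorem stmt_3 (n : ℕ) (hn : 2 ≤ n) :
    Integrable (fun p : (Fin n → ℂ) × ℝ =>
      (normSq p.1 ^ 2 + p.2 ^ 2 - 1) * normSq p.1 /
        (p.2 ^ 2 + (1 + normSq p.1) ^ 2) ^ (n + 2)) ∧
    (0 < ∫ p : (Fin n → ℂ) × ℝ,
        (normSq p.1 ^ 2 + p.2 ^ 2 - 1) * normSq p.1 /
          (p.2 ^ 2 + (1 + normSq p.1) ^ 2) ^ (n + 2)) ∧
    0 < (1 / (2 * (n : ℝ))) * ∫ p : (Fin n → ℂ) × ℝ,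
        4 ^ n * ((normSq p.1 ^ 2 + p.2 ^ 2 - 1) * normSq p.1) /
          (p.2 ^ 2 + (1 + normSq p.1) ^ 2) ^ (n + 2) := by
  exact stmt_3_general n n (by lia) le_rfl
end

section
/- For every integer n ≥ 1, the improper integrals ∫₀^∞ (r² − 1) r^{n+1} / (r² + 1)^{n+2} dr and ∫₁^∞ (r² − 1)² r^{n−1} / (r² + 1)^{n+2} dr converge, they are equal, and their common value is strictly positive. -/
open MeasureTheory Real Set

/-!
The inversion `r ↦ r⁻¹` folds `∫₀^∞ f` into `∫₁^∞ (f r + r⁻² f (r⁻¹))`. The kernel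
`f r = (r² - 1) rᵏ / (r² + 1)ᵏ⁺¹` changes sign under inversion, so the folded integrand is
`(1 - r⁻²) f r`, in which the factor `r² - 1` appears squared; it is therefore positive
for `r > 1`. Both integrals converge by a degree count.
-/

section RationalFunctions

open Asymptotics Filter Polynomial

theorem isBigO_atTop_eval_div_eval_inv_one_add_sq {P Q : ℝ[X]}
    (hdeg : P.natDegree + 2 ≤ Q.natDegree) :
    (fun x => P.eval x / Q.eval x) =O[atTop] fun x => (1 + x ^ 2)⁻¹ := by
  have hQ : Q ≠ 0 := ne_zero_of_natDegree_gt (show 0 < Q.natDegree by omega)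
  have hdegree : (P * (1 + X ^ 2)).degree ≤ Q.degree := by
    rw [degree_eq_natDegree hQ]
    exact degree_le_of_natDegree_le (by compute_degree; omega)
  refine ((isBigO_atTop_of_degree_le _ _ hdegree).mul
    (isBigO_refl (fun x => (Q.eval x)⁻¹ * (1 + x ^ 2)⁻¹) atTop)).congr' ?_ ?_
  · refine .of_forall fun x => ?_
    have : 1 + x ^ 2 ≠ 0 := by positivity
    simp only [eval_mul, eval_add, eval_one, eval_pow, eval_X]
    field_simp
  · filter_upwards [atTop_le_cofinite (eventually_cofinite_not_isRoot hQ)] with x hx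
    exact mul_inv_cancel_left₀ hx _

theorem integrableOn_Ioi_eval_div_eval {P Q : ℝ[X]} {a : ℝ}
    (hdeg : P.natDegree + 2 ≤ Q.natDegree) (hQ : ∀ x ∈ Ici a, Q.eval x ≠ 0) :
    IntegrableOn (fun x => P.eval x / Q.eval x) (Ioi a) := by
  have hcont : ContinuousOn (fun x => P.eval x / Q.eval x) (Ici a) :=
    P.continuousOn.div Q.continuousOn hQ
  exact ((hcont.locallyIntegrableOn measurableSet_Ici).integrableOn_of_isBigO_atTop
    (isBigO_atTop_eval_div_eval_inv_one_add_sq hdeg)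
    (integrable_inv_one_add_sq.integrableAtFilter _)).mono_set Ioi_subset_Ici_self

theorem integrableOn_Ioi_sq_sub_one_pow_mul_pow_div {i j k : ℕ} (h : 2 * i + j + 2 ≤ 2 * k)
    (a : ℝ) : IntegrableOn (fun x => (x ^ 2 - 1) ^ i * x ^ j / (x ^ 2 + 1) ^ k) (Ioi a) := by
  let P : ℝ[X] := (X ^ 2 - 1) ^ i * X ^ j
  let Q : ℝ[X] := (X ^ 2 + 1) ^ k
  have hP : P.natDegree ≤ 2 * i + j := by
    simp only [P]
    compute_degree
    omega
  have hQ : Q.natDegree = 2 * k := by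
    rw [natDegree_pow, ← C_1, natDegree_X_pow_add_C, mul_comm]
  have hP_eval (x : ℝ) : P.eval x = (x ^ 2 - 1) ^ i * x ^ j := by simp [P]
  have hQ_eval (x : ℝ) : Q.eval x = (x ^ 2 + 1) ^ k := by simp [Q]
  simp only [← hP_eval, ← hQ_eval]
  refine integrableOn_Ioi_eval_div_eval (by omega) fun x _ => ?_
  rw [hQ_eval]
  positivity

end RationalFunctions

section Inversion

variable {E : Type*} [NormedAddCommGroup E] [NormedSpace ℝ E] {a : ℝ}

theorem integrableOn_Ioi_inv_sq_smul_comp_inv_iff (ha : 0 < a) (f : ℝ → E) :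
    IntegrableOn (fun x => (x ^ 2)⁻¹ • f x⁻¹) (Ioi a) ↔ IntegrableOn f (Ioo 0 a⁻¹) := by
  simpa [inv_Ioi₀ ha] using (integrableOn_image_iff_integrableOn_abs_deriv_smul measurableSet_Ioi
    (fun x hx => (hasDerivAt_inv (ha.trans hx).ne').hasDerivWithinAt) inv_injective.injOn f).symm

theorem integral_Ioi_inv_sq_smul_comp_inv (ha : 0 < a) (f : ℝ → E) :
    ∫ x in Ioi a, (x ^ 2)⁻¹ • f x⁻¹ = ∫ x in Ioo 0 a⁻¹, f x := by
  simpa [inv_Ioi₀ ha] using (integral_image_eq_integral_abs_deriv_smul measurableSet_Ioi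
    (fun x hx => (hasDerivAt_inv (ha.trans hx).ne').hasDerivWithinAt) inv_injective.injOn f).symm

theorem integral_Ioi_zero_eq_integral_Ioi_one_inv_sq_smul_comp_inv_add {f : ℝ → E}
    (hf : IntegrableOn f (Ioi 0)) :
    ∫ x in Ioi 0, f x = ∫ x in Ioi 1, ((x ^ 2)⁻¹ • f x⁻¹ + f x) := by
  have hIoo : IntegrableOn f (Ioo 0 1) := hf.mono_set Ioo_subset_Ioi_self
  have hIoi : IntegrableOn f (Ioi 1) := hf.mono_set (Ioi_subset_Ioi zero_le_one)
  have hinv : IntegrableOn (fun x => (x ^ 2)⁻¹ • f x⁻¹) (Ioi 1) :=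
    (integrableOn_Ioi_inv_sq_smul_comp_inv_iff one_pos f).2 (by rwa [inv_one])
  calc ∫ x in Ioi 0, f x = (∫ x in Ioc 0 1, f x) + ∫ x in Ioi 1, f x := by
        rw [← setIntegral_union (Ioc_disjoint_Ioi le_rfl) measurableSet_Ioi
          (hf.mono_set Ioc_subset_Ioi_self) hIoi, Ioc_union_Ioi_eq_Ioi zero_le_one]
    _ = (∫ x in Ioi 1, (x ^ 2)⁻¹ • f x⁻¹) + ∫ x in Ioi 1, f x := by
        rw [integral_Ioi_inv_sq_smul_comp_inv one_pos, inv_one, integral_Ioc_eq_integral_Ioo]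
    _ = ∫ x in Ioi 1, ((x ^ 2)⁻¹ • f x⁻¹ + f x) := (integral_add hinv hIoi).symm

end Inversion

theorem setIntegral_pos_of_pos {α : Type*} [MeasurableSpace α] {μ : Measure α} {s : Set α}
    {f : α → ℝ} (hs : MeasurableSet s) (hμs : μ s ≠ 0) (hf : IntegrableOn f s μ)
    (hpos : ∀ x ∈ s, 0 < f x) : 0 < ∫ x in s, f x ∂μ := by
  have hnonneg : 0 ≤ᵐ[μ.restrict s] f := ae_restrict_of_forall_mem hs fun x hx => (hpos x hx).le
  have hsupport : Function.support f ∩ s = s := inter_eq_right.2 fun x hx => (hpos x hx).ne'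
  rw [setIntegral_pos_iff_support_of_nonneg_ae hnonneg hf, hsupport]
  exact pos_iff_ne_zero.2 hμs

theorem sq_sub_one_mul_pow_div_inv {K : Type*} [Field K] {x : K} (hx : x ≠ 0) (k : ℕ) :
    (x⁻¹ ^ 2 - 1) * x⁻¹ ^ k / (x⁻¹ ^ 2 + 1) ^ (k + 1) =
      -((x ^ 2 - 1) * x ^ k / (x ^ 2 + 1) ^ (k + 1)) := by
  have hsub : x⁻¹ ^ 2 - 1 = -(x ^ 2 - 1) / x ^ 2 := by field_simp; ring
  have hadd : x⁻¹ ^ 2 + 1 = (x ^ 2 + 1) / x ^ 2 := by field_simp; ring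
  rw [hsub, hadd, div_pow, inv_pow]
  field_simp
  ring

theorem inv_sq_mul_sq_sub_one_mul_pow_div_inv_add {K : Type*} [Field K] {x : K} (hx : x ≠ 0)
    (k : ℕ) :
    (x ^ 2)⁻¹ * ((x⁻¹ ^ 2 - 1) * x⁻¹ ^ (k + 2) / (x⁻¹ ^ 2 + 1) ^ (k + 3)) +
        (x ^ 2 - 1) * x ^ (k + 2) / (x ^ 2 + 1) ^ (k + 3) =
      (x ^ 2 - 1) ^ 2 * x ^ k / (x ^ 2 + 1) ^ (k + 3) := by
  rw [sq_sub_one_mul_pow_div_inv hx]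
  field_simp
  ring

theorem stmt_4 (n : ℕ) (hn : 1 ≤ n) :
    IntegrableOn (fun r : ℝ => (r ^ 2 - 1) * r ^ (n + 1) / (r ^ 2 + 1) ^ (n + 2))
      (Ioi (0 : ℝ)) ∧
    IntegrableOn (fun r : ℝ => (r ^ 2 - 1) ^ 2 * r ^ (n - 1) / (r ^ 2 + 1) ^ (n + 2))
      (Ioi (1 : ℝ)) ∧
    (∫ r in Ioi (0 : ℝ), (r ^ 2 - 1) * r ^ (n + 1) / (r ^ 2 + 1) ^ (n + 2)) =
      (∫ r in Ioi (1 : ℝ), (r ^ 2 - 1) ^ 2 * r ^ (n - 1) / (r ^ 2 + 1) ^ (n + 2)) ∧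
    0 < ∫ r in Ioi (0 : ℝ), (r ^ 2 - 1) * r ^ (n + 1) / (r ^ 2 + 1) ^ (n + 2) := by
  obtain ⟨m, rfl⟩ := Nat.exists_eq_add_of_le' hn
  rw [Nat.add_sub_cancel]
  have hf : IntegrableOn (fun r : ℝ => (r ^ 2 - 1) * r ^ (m + 2) / (r ^ 2 + 1) ^ (m + 3))
      (Ioi 0) := by
    simpa only [pow_one] using
      integrableOn_Ioi_sq_sub_one_pow_mul_pow_div (i := 1) (j := m + 2) (k := m + 3) (by omega) 0
  have hg : IntegrableOn (fun r : ℝ => (r ^ 2 - 1) ^ 2 * r ^ m / (r ^ 2 + 1) ^ (m + 3))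
      (Ioi 1) :=
    integrableOn_Ioi_sq_sub_one_pow_mul_pow_div (by omega) 1
  have hfold : ∫ r in Ioi (0 : ℝ), (r ^ 2 - 1) * r ^ (m + 2) / (r ^ 2 + 1) ^ (m + 3) =
      ∫ r in Ioi (1 : ℝ), (r ^ 2 - 1) ^ 2 * r ^ m / (r ^ 2 + 1) ^ (m + 3) :=
    (integral_Ioi_zero_eq_integral_Ioi_one_inv_sq_smul_comp_inv_add hf).trans <|
      setIntegral_congr_fun measurableSet_Ioi fun _ hr =>
        inv_sq_mul_sq_sub_one_mul_pow_div_inv_add (one_pos.trans hr).ne' m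
  refine ⟨hf, hg, hfold, hfold ▸ setIntegral_pos_of_pos measurableSet_Ioi (by simp) hg ?_⟩
  intro r hr
  have hsub : 0 < r ^ 2 - 1 := sub_pos.2 (one_lt_pow₀ hr two_ne_zero)
  have hr0 : 0 < r := one_pos.trans hr
  positivity
end

section
/- Let n ≥ 2 be an integer. Then the function (r,τ) ↦ (r⁴ − τ²) r^{2n+1} / ((r⁴ + τ²)(τ² + (1+r²)²)^{n+1}) is integrable on (0,∞) × (0,∞) and ∫₀^∞ ∫₀^∞ (r⁴ − τ²) r^{2n+1} / ((r⁴ + τ²)(τ² + (1+r²)²)^{n+1}) dr dτ > 0. -/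
open MeasureTheory Real Set

/-!
Put `s = r ^ 2`. Up to the factor `1 / 2` the integrand becomes `k (s, τ) * w (s, τ)`, where
`k (s, τ) = (s ^ 2 - τ ^ 2) / (s ^ 2 + τ ^ 2)` is antisymmetric, bounded by `1` and has the sign of
`s - τ` on the quadrant, and `w (s, τ) = s ^ n / (τ ^ 2 + (1 + s) ^ 2) ^ (n + 1)`.
The weight decays like `‖(s, τ)‖ ^ (-(n + 2))`, which is integrable on the plane as soon as
`1 ≤ n`. Averaging the integral with its image under `(s, τ) ↦ (τ, s)` replaces `w` by half of
`w (s, τ) - w (τ, s)`. With `c = 1 + s ^ 2 + τ ^ 2` this difference compares the values of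
`x ↦ x ^ n / (c + 2 * x) ^ (n + 1)` at `s` and `τ`, and this function increases on `[0, c / 2]`,
which contains both points. So the symmetrized integrand is positive off the diagonal.
-/

section ProductMeasure

variable {α β E : Type*} [MeasurableSpace α] [MeasurableSpace β]
  [NormedAddCommGroup E] [NormedSpace ℝ E]

theorem ae_prod_fst_ne_snd [MeasurableEq α] (μ ν : Measure α) [SFinite ν] [NullSingletonClass ν] :
    ∀ᵐ z ∂μ.prod ν, z.1 ≠ z.2 := by
  have hmeas : MeasurableSet {z : α × α | z.1 ≠ z.2} :=
    (measurableSet_eq_fun measurable_fst measurable_snd).compl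
  rw [Measure.ae_prod_iff_ae_ae hmeas]
  exact .of_forall fun x => (ν.ae_ne x).mono fun _ => Ne.symm

theorem integral_pos_of_ae_pos {μ : Measure α} [NeZero μ] {f : α → ℝ} (hf : Integrable f μ)
    (hpos : ∀ᵐ x ∂μ, 0 < f x) : 0 < ∫ x, f x ∂μ := by
  rw [integral_pos_iff_support_of_nonneg_ae (hpos.mono fun _ => le_of_lt) hf, pos_iff_ne_zero]
  intro hsupp
  obtain ⟨x, hx_pos, hx_zero⟩ := (hpos.and (measure_eq_zero_iff_ae_notMem.1 hsupp)).exists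
  exact hx_zero hx_pos.ne'

theorem setIntegral_prod_symm {μ : Measure α} {ν : Measure β} [SFinite μ] [SFinite ν] {s : Set α}
    {t : Set β} {f : α × β → E} (hf : IntegrableOn f (s ×ˢ t) (μ.prod ν)) :
    ∫ z in s ×ˢ t, f z ∂μ.prod ν = ∫ y in t, ∫ x in s, f (x, y) ∂μ ∂ν := by
  rw [IntegrableOn, ← Measure.prod_restrict] at hf
  rw [← Measure.prod_restrict, integral_prod_symm f hf]

theorem setIntegral_prod_self_pos_of_add_swap_pos {μ : Measure α} [SFinite μ] {s : Set α}
    (hs : μ s ≠ 0) {f : α × α → ℝ} (hf : IntegrableOn f (s ×ˢ s) (μ.prod μ))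
    (hpos : ∀ᵐ z ∂(μ.prod μ).restrict (s ×ˢ s), 0 < f z + f z.swap) :
    0 < ∫ z in s ×ˢ s, f z ∂μ.prod μ := by
  have : NeZero ((μ.prod μ) (s ×ˢ s)) := ⟨by
    rw [Measure.prod_prod]
    exact mul_ne_zero hs hs⟩
  have hf_swap : IntegrableOn (fun z => f z.swap) (s ×ˢ s) (μ.prod μ) := by
    rw [IntegrableOn, ← Measure.prod_restrict] at hf ⊢
    exact hf.swap
  have hsum : 0 < ∫ z in s ×ˢ s, (f z + f z.swap) ∂μ.prod μ :=
    integral_pos_of_ae_pos (hf.add hf_swap) hpos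
  rw [integral_add hf hf_swap, setIntegral_prod_swap] at hsum
  linarith

theorem integrableOn_Ioi_prod_comp_rpow_iff {ν : Measure β} [SFinite ν] {t : Set β}
    {g : ℝ × β → E} (hg : StronglyMeasurable g) {a : ℝ} (ha : a ≠ 0) :
    IntegrableOn (fun z : ℝ × β => (|a| * z.1 ^ (a - 1)) • g (z.1 ^ a, z.2))
        (Ioi 0 ×ˢ t) (volume.prod ν) ↔
      IntegrableOn g (Ioi 0 ×ˢ t) (volume.prod ν) := by
  have hcomp : StronglyMeasurable fun z : ℝ × β => (|a| * z.1 ^ (a - 1)) • g (z.1 ^ a, z.2) :=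
    StronglyMeasurable.smul (by fun_prop) (hg.comp_measurable (by fun_prop))
  have norm_slice (y : β) :
      ∫ x in Ioi 0, ‖(|a| * x ^ (a - 1)) • g (x ^ a, y)‖ = ∫ x in Ioi 0, ‖g (x, y)‖ := by
    rw [← integral_comp_rpow_Ioi (fun x => ‖g (x, y)‖) ha]
    refine setIntegral_congr_fun measurableSet_Ioi fun x (hx : 0 < x) => ?_
    rw [norm_smul, norm_of_nonneg (by positivity), smul_eq_mul]
  rw [IntegrableOn, IntegrableOn, ← Measure.prod_restrict,
    integrable_prod_iff' hcomp.aestronglyMeasurable,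
    integrable_prod_iff' hg.aestronglyMeasurable]
  simp only [norm_slice]
  exact and_congr_left' <| Filter.eventually_congr <| .of_forall fun y =>
    integrableOn_Ioi_comp_rpow_iff (fun x => g (x, y)) ha

end ProductMeasure

theorem strictMonoOn_pow_div_add_mul_pow {n : ℕ} (hn : n ≠ 0) {b : ℝ} (hb : 0 < b) (c : ℝ) :
    StrictMonoOn (fun x : ℝ => x ^ n / (c + b * x) ^ (n + 1)) (Icc 0 (c / b)) := by
  rintro x ⟨hx, -⟩ y ⟨-, hy⟩ hxy
  obtain ⟨m, rfl⟩ := Nat.exists_eq_succ_of_ne_zero hn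
  have hy₀ : 0 < y := hx.trans_lt hxy
  have hyc : b * y ≤ c := (le_div_iff₀' hb).1 hy
  have hc : 0 < c := (mul_pos hb hy₀).trans_le hyc
  have split (z : ℝ) : z ^ (m + 1) / (c + b * z) ^ (m + 2) =
      (z / (c + b * z)) ^ m * (z / (c + b * z) ^ 2) := by
    rw [div_pow, div_mul_div_comm, pow_succ, pow_add]
  have hle : x / (c + b * x) ≤ y / (c + b * y) := by
    rw [div_le_div_iff₀ (by positivity) (by positivity)]
    linarith [mul_le_mul_of_nonneg_left hxy.le hc.le]
  have hlt : x / (c + b * x) ^ 2 < y / (c + b * y) ^ 2 := by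
    have hprod : (b * x) * (b * y) < c * c := by
      calc (b * x) * (b * y) < (b * y) * (b * y) := by gcongr
        _ ≤ c * c := by gcongr
    rw [div_lt_div_iff₀ (by positivity) (by positivity)]
    linarith [mul_pos (sub_pos.2 hxy) (sub_pos.2 hprod)]
  calc x ^ (m + 1) / (c + b * x) ^ (m + 2)
      = (x / (c + b * x)) ^ m * (x / (c + b * x) ^ 2) := split x
    _ ≤ (y / (c + b * y)) ^ m * (x / (c + b * x) ^ 2) := by gcongr
    _ < (y / (c + b * y)) ^ m * (y / (c + b * y) ^ 2) := by gcongr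
    _ = y ^ (m + 1) / (c + b * y) ^ (m + 2) := (split y).symm

/-- The weight `s ^ n / (τ ^ 2 + (1 + s) ^ 2) ^ (n + 1)` at `z = (s, τ)`: the density of the
Jerison–Lee bubble on the Heisenberg group in the variable `s = |z|²`, times the power of `s` that
is left over from the quadratic moment and the polar Jacobian. -/
noncomputable def bubbleWeight (n : ℕ) (z : ℝ × ℝ) : ℝ :=
  z.1 ^ n / (z.2 ^ 2 + (1 + z.1) ^ 2) ^ (n + 1)

/-- The integrand of `stmt_5` in the variables `(s, τ)`, `s = r ^ 2`, without the Jacobian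
factor `1 / 2`. -/
noncomputable def bubbleIntegrand (n : ℕ) (z : ℝ × ℝ) : ℝ :=
  (z.1 ^ 2 - z.2 ^ 2) / (z.1 ^ 2 + z.2 ^ 2) * bubbleWeight n z

theorem one_add_norm_sq_le_two_mul {z : ℝ × ℝ} (hz : 0 ≤ z.1) :
    (1 + ‖z‖) ^ 2 ≤ 2 * (z.2 ^ 2 + (1 + z.1) ^ 2) := by
  rw [Prod.norm_def, norm_of_nonneg hz, norm_eq_abs]
  rcases max_cases z.1 |z.2| with ⟨hmax, -⟩ | ⟨hmax, -⟩ <;> rw [hmax]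
  · nlinarith
  · nlinarith [sq_nonneg (1 - |z.2|), sq_abs z.2]

theorem bubbleWeight_le (n : ℕ) {z : ℝ × ℝ} (hz : 0 ≤ z.1) :
    bubbleWeight n z ≤ 2 ^ (n + 1) * (1 + ‖z‖) ^ (-(n + 2 : ℝ)) := by
  have hs : z.1 ≤ 1 + ‖z‖ := by linarith [le_norm_self z.1, norm_fst_le z]
  have hQ : (1 + ‖z‖) ^ 2 / 2 ≤ z.2 ^ 2 + (1 + z.1) ^ 2 := by
    linarith [one_add_norm_sq_le_two_mul hz]
  calc z.1 ^ n / (z.2 ^ 2 + (1 + z.1) ^ 2) ^ (n + 1)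
      ≤ (1 + ‖z‖) ^ n / ((1 + ‖z‖) ^ 2 / 2) ^ (n + 1) := by gcongr
    _ = 2 ^ (n + 1) * ((1 + ‖z‖) ^ (n + 2))⁻¹ := by
        rw [div_pow, ← pow_mul]
        field_simp
        ring
    _ = 2 ^ (n + 1) * (1 + ‖z‖) ^ (-(n + 2 : ℝ)) := by
        rw [rpow_neg (by positivity)]
        norm_cast

theorem abs_bubbleIntegrand_le (n : ℕ) {z : ℝ × ℝ} (hz : 0 ≤ z.1) :
    |bubbleIntegrand n z| ≤ bubbleWeight n z := by
  have hw : 0 ≤ bubbleWeight n z := by unfold bubbleWeight; positivity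
  have hk : |(z.1 ^ 2 - z.2 ^ 2) / (z.1 ^ 2 + z.2 ^ 2)| ≤ 1 := by
    rw [abs_div, abs_of_nonneg (by positivity : 0 ≤ z.1 ^ 2 + z.2 ^ 2)]
    refine div_le_one_of_le₀ (abs_le.2 ⟨?_, ?_⟩) (by positivity) <;>
      linarith [sq_nonneg z.1, sq_nonneg z.2]
  rw [bubbleIntegrand, abs_mul, abs_of_nonneg hw]
  exact mul_le_of_le_one_left hw hk

theorem measurable_bubbleIntegrand (n : ℕ) : Measurable (bubbleIntegrand n) := by
  unfold bubbleIntegrand bubbleWeight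
  fun_prop

theorem integrableOn_bubbleIntegrand {n : ℕ} (hn : 0 < n) :
    IntegrableOn (bubbleIntegrand n) (Ioi 0 ×ˢ Ioi 0) := by
  have hdim : (Module.finrank ℝ (ℝ × ℝ) : ℝ) < n + 2 := by
    simp only [Module.finrank_prod, Module.finrank_self]
    norm_num [hn]
  have hdecay : Integrable fun z : ℝ × ℝ => 2 ^ (n + 1) * (1 + ‖z‖) ^ (-(n + 2 : ℝ)) :=
    (integrable_one_add_norm hdim).const_mul _
  refine hdecay.integrableOn.mono' (measurable_bubbleIntegrand n).aestronglyMeasurable ?_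
  filter_upwards [ae_restrict_mem (measurableSet_Ioi.prod measurableSet_Ioi)] with z ⟨hs, _⟩
  exact (abs_bubbleIntegrand_le n hs.le).trans (bubbleWeight_le n hs.le)

theorem bubbleWeight_swap_lt_iff {n : ℕ} (hn : n ≠ 0) {z : ℝ × ℝ} (h₁ : 0 ≤ z.1) (h₂ : 0 ≤ z.2) :
    bubbleWeight n z.swap < bubbleWeight n z ↔ z.2 < z.1 := by
  set c := 1 + z.1 ^ 2 + z.2 ^ 2 with hc
  have hz : bubbleWeight n z = z.1 ^ n / (c + 2 * z.1) ^ (n + 1) := by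
    rw [bubbleWeight, hc]
    ring_nf
  have hz_swap : bubbleWeight n z.swap = z.2 ^ n / (c + 2 * z.2) ^ (n + 1) := by
    rw [bubbleWeight, hc, Prod.fst_swap, Prod.snd_swap]
    ring_nf
  have mem₁ : z.1 ∈ Icc 0 (c / 2) := ⟨h₁, by nlinarith [sq_nonneg (1 - z.1)]⟩
  have mem₂ : z.2 ∈ Icc 0 (c / 2) := ⟨h₂, by nlinarith [sq_nonneg (1 - z.2)]⟩
  rw [hz, hz_swap]
  exact (strictMonoOn_pow_div_add_mul_pow hn two_pos c).lt_iff_lt mem₂ mem₁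

theorem bubbleIntegrand_add_swap (n : ℕ) (z : ℝ × ℝ) :
    bubbleIntegrand n z + bubbleIntegrand n z.swap =
      (z.1 ^ 2 - z.2 ^ 2) / (z.1 ^ 2 + z.2 ^ 2) * (bubbleWeight n z - bubbleWeight n z.swap) := by
  simp only [bubbleIntegrand, Prod.fst_swap, Prod.snd_swap]
  rw [add_comm (z.2 ^ 2), ← neg_sub (z.1 ^ 2)]
  ring

theorem bubbleIntegrand_add_swap_pos_of_lt {n : ℕ} (hn : n ≠ 0) {z : ℝ × ℝ} (h₂ : 0 ≤ z.2)
    (hlt : z.2 < z.1) : 0 < bubbleIntegrand n z + bubbleIntegrand n z.swap := by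
  have h₁ : 0 < z.1 := h₂.trans_lt hlt
  have hk : 0 < z.1 ^ 2 - z.2 ^ 2 := sub_pos.2 (by gcongr)
  have hw : 0 < bubbleWeight n z - bubbleWeight n z.swap :=
    sub_pos.2 ((bubbleWeight_swap_lt_iff hn h₁.le h₂).2 hlt)
  rw [bubbleIntegrand_add_swap]
  positivity

theorem bubbleIntegrand_add_swap_pos {n : ℕ} (hn : n ≠ 0) {z : ℝ × ℝ} (h₁ : 0 ≤ z.1)
    (h₂ : 0 ≤ z.2) (hne : z.1 ≠ z.2) : 0 < bubbleIntegrand n z + bubbleIntegrand n z.swap := by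
  rcases hne.lt_or_gt with hlt | hgt
  · rw [add_comm]
    exact bubbleIntegrand_add_swap_pos_of_lt hn (z := z.swap) h₁ hlt
  · exact bubbleIntegrand_add_swap_pos_of_lt hn h₂ hgt

theorem setIntegral_bubbleIntegrand_pos {n : ℕ} (hn : 0 < n) :
    0 < ∫ z in Ioi 0 ×ˢ Ioi 0, bubbleIntegrand n z := by
  refine setIntegral_prod_self_pos_of_add_swap_pos (by simp) (integrableOn_bubbleIntegrand hn) ?_
  filter_upwards [ae_restrict_of_ae (ae_prod_fst_ne_snd volume volume),
    ae_restrict_mem (measurableSet_Ioi.prod measurableSet_Ioi)] with z hne ⟨hs, hτ⟩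
  exact bubbleIntegrand_add_swap_pos hn.ne' hs.le hτ.le hne

theorem quartic_integrand_eq_bubbleIntegrand_comp_rpow (n : ℕ) (r τ : ℝ) :
    (r ^ 4 - τ ^ 2) * r ^ (2 * n + 1) /
        ((r ^ 4 + τ ^ 2) * (τ ^ 2 + (1 + r ^ 2) ^ 2) ^ (n + 1)) =
      (1 / 2) * ((|(2 : ℝ)| * r ^ ((2 : ℝ) - 1)) • bubbleIntegrand n (r ^ (2 : ℝ), τ)) := by
  have hr : r ^ ((2 : ℝ) - 1) = r := by norm_num
  rw [bubbleIntegrand, bubbleWeight, hr, rpow_two, abs_two, smul_eq_mul, div_mul_div_comm,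
    ← pow_mul, ← pow_mul, pow_succ r (2 * n)]
  ring

theorem stmt_5_general {n : ℕ} (hn : 0 < n) :
    IntegrableOn (fun p : ℝ × ℝ =>
      (p.1 ^ 4 - p.2 ^ 2) * p.1 ^ (2 * n + 1) /
        ((p.1 ^ 4 + p.2 ^ 2) * (p.2 ^ 2 + (1 + p.1 ^ 2) ^ 2) ^ (n + 1)))
      (Ioi (0 : ℝ) ×ˢ Ioi (0 : ℝ)) ∧
    0 < ∫ τ in Ioi (0 : ℝ), ∫ r in Ioi (0 : ℝ),
        (r ^ 4 - τ ^ 2) * r ^ (2 * n + 1) /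
          ((r ^ 4 + τ ^ 2) * (τ ^ 2 + (1 + r ^ 2) ^ 2) ^ (n + 1)) := by
  have hint := integrableOn_bubbleIntegrand hn
  simp only [quartic_integrand_eq_bubbleIntegrand_comp_rpow]
  constructor
  · exact ((integrableOn_Ioi_prod_comp_rpow_iff
      (measurable_bubbleIntegrand n).stronglyMeasurable two_ne_zero).2 hint).const_mul _
  · have subst_inner (τ : ℝ) := integral_comp_rpow_Ioi (fun s => bubbleIntegrand n (s, τ))
      (two_ne_zero (α := ℝ))
    have hpos := setIntegral_bubbleIntegrand_pos hn
    rw [Measure.volume_eq_prod, setIntegral_prod_symm hint] at hpos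
    simp only [integral_const_mul, subst_inner]
    positivity

theorem stmt_5 (n : ℕ) (hn : 2 ≤ n) :
    IntegrableOn (fun p : ℝ × ℝ =>
      (p.1 ^ 4 - p.2 ^ 2) * p.1 ^ (2 * n + 1) /
        ((p.1 ^ 4 + p.2 ^ 2) * (p.2 ^ 2 + (1 + p.1 ^ 2) ^ 2) ^ (n + 1)))
      (Ioi (0 : ℝ) ×ˢ Ioi (0 : ℝ)) ∧
    0 < ∫ τ in Ioi (0 : ℝ), ∫ r in Ioi (0 : ℝ),
        (r ^ 4 - τ ^ 2) * r ^ (2 * n + 1) /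
          ((r ^ 4 + τ ^ 2) * (τ ^ 2 + (1 + r ^ 2) ^ 2) ^ (n + 1)) :=
  stmt_5_general (two_pos.trans_le hn)
end

section
/- Let n ≥ 2 be an integer and let r > 0 be a real number. Then the function h(r,·) : z ↦ z^n / (r² + 2rz + 1)^{n+1} is monotone increasing on the interval [0,1]. Consequently, for every θ ∈ [0, π/4] one has h(r, cos θ) ≥ h(r, sin θ). -/
open Real Set

/-!
Write `r ^ 2 + 2 * r * z + 1 = a + b * z` with `a = r ^ 2 + 1` and `b = 2 * r`. The quotient
`z ^ n / (a + b * z) ^ m` with `n ≤ m ≤ 2 * n` is a product of powers of `z / (a + b * z)` and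
`z / (a + b * z) ^ 2`. The first of these increases when `0 ≤ a`, the second as long as
`|b * z| ≤ a`, which on `[0, 1]` is the inequality `2 * |r| ≤ r ^ 2 + 1`.
-/

section LinearDenominator

variable {K : Type*} [Field K] [LinearOrder K] [IsStrictOrderedRing K] {a b : K}

theorem monotoneOn_div_add_mul (ha : 0 ≤ a) :
    MonotoneOn (fun z : K => z / (a + b * z)) {z | 0 < a + b * z} := by
  intro x hx y hy hxy
  have cross : y * (a + b * x) - x * (a + b * y) = a * (y - x) := by ring
  rw [div_le_div_iff₀ hx hy, ← sub_nonneg, cross]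
  exact mul_nonneg ha (sub_nonneg.2 hxy)

theorem monotoneOn_div_add_mul_sq :
    MonotoneOn (fun z : K => z / (a + b * z) ^ 2) {z | b * z ∈ Ioc (-a) a} := by
  rintro x ⟨hx, hxa⟩ y ⟨hy, hya⟩ hxy
  have hDx : 0 < a + b * x := neg_lt_iff_pos_add'.1 hx
  have hDy : 0 < a + b * y := neg_lt_iff_pos_add'.1 hy
  have cross : y * (a + b * x) ^ 2 - x * (a + b * y) ^ 2 =
      (y - x) * (a ^ 2 - b * x * (b * y)) := by ring
  have hprod : b * x * (b * y) ≤ a ^ 2 := by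
    linarith [mul_nonneg (sub_nonneg.2 hxa) hDy.le, mul_nonneg hDx.le (sub_nonneg.2 hya)]
  rw [div_le_div_iff₀ (pow_pos hDx 2) (pow_pos hDy 2), ← sub_nonneg, cross]
  exact mul_nonneg (sub_nonneg.2 hxy) (sub_nonneg.2 hprod)

theorem monotoneOn_pow_div_add_mul_pow {n m : ℕ} (hnm : n ≤ m) (hmn : m ≤ 2 * n) :
    MonotoneOn (fun z : K => z ^ n / (a + b * z) ^ m) {z | 0 ≤ z ∧ b * z ∈ Ioc (-a) a} := by
  obtain ⟨j, rfl⟩ := Nat.exists_eq_add_of_le hnm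
  obtain ⟨i, rfl⟩ := Nat.exists_eq_add_of_le' (show j ≤ n by omega)
  have factor (z : K) : z ^ (i + j) / (a + b * z) ^ (i + j + j) =
      (z / (a + b * z)) ^ i * (z / (a + b * z) ^ 2) ^ j := by
    rw [div_pow, div_pow, div_mul_div_comm, ← pow_add, ← pow_mul, ← pow_add]
    congr 2
    ring
  rintro x ⟨hx₀, hx⟩ y ⟨hy₀, hy⟩ hxy
  have hDx : 0 < a + b * x := neg_lt_iff_pos_add'.1 hx.1
  have hDy : 0 < a + b * y := neg_lt_iff_pos_add'.1 hy.1
  have ha : 0 ≤ a := by linarith [hx.1, hx.2]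
  have linear_le : x / (a + b * x) ≤ y / (a + b * y) := monotoneOn_div_add_mul ha hDx hDy hxy
  have square_le : x / (a + b * x) ^ 2 ≤ y / (a + b * y) ^ 2 := monotoneOn_div_add_mul_sq hx hy hxy
  simp only [factor]
  gcongr

end LinearDenominator

theorem two_mul_mul_mem_Ioc {R : Type*} [CommRing R] [LinearOrder R] [IsStrictOrderedRing R]
    {r z : R} (hr : r ≠ -1) (hz : z ∈ Icc (0 : R) 1) :
    2 * r * z ∈ Ioc (-(r ^ 2 + 1)) (r ^ 2 + 1) := by
  have zero_mem : (0 : R) ∈ Ioc (-(r ^ 2 + 1)) (r ^ 2 + 1) :=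
    ⟨neg_neg_of_pos (by positivity), by positivity⟩
  have two_mul_mem : 2 * r ∈ Ioc (-(r ^ 2 + 1)) (r ^ 2 + 1) := by
    have add_one_sq_pos : 0 < (r + 1) ^ 2 := sq_pos_of_ne_zero (mt eq_neg_of_add_eq_zero_left hr)
    exact ⟨by linarith, by linarith [sq_nonneg (r - 1)]⟩
  simpa only [smul_eq_mul, mul_comm z] using
    (convex_Ioc (𝕜 := R) _ _).smul_mem_of_zero_mem zero_mem two_mul_mem hz

theorem sin_le_cos_of_mem_Icc {θ : ℝ} (hθ : θ ∈ Icc (-(3 * π / 4)) (π / 4)) :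
    sin θ ≤ cos θ := by
  have sin_pi_div_four_sub : sin (π / 4 - θ) = √2 / 2 * (cos θ - sin θ) := by
    rw [Real.sin_sub, sin_pi_div_four, cos_pi_div_four, mul_sub]
  have sin_sub_nonneg : 0 ≤ sin (π / 4 - θ) :=
    sin_nonneg_of_nonneg_of_le_pi (sub_nonneg.2 hθ.2) (by linarith [hθ.1])
  rw [sin_pi_div_four_sub] at sin_sub_nonneg
  exact sub_nonneg.1 (nonneg_of_mul_nonneg_right sin_sub_nonneg (by positivity))

theorem stmt_6_general (n : ℕ) (hn : 1 ≤ n) (r : ℝ) (hr : r ≠ -1) :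
    MonotoneOn (fun z : ℝ => z ^ n / (r ^ 2 + 2 * r * z + 1) ^ (n + 1)) (Icc (0 : ℝ) 1) ∧
    ∀ θ : ℝ, θ ∈ Icc (0 : ℝ) (π / 4) →
      Real.sin θ ^ n / (r ^ 2 + 2 * r * Real.sin θ + 1) ^ (n + 1) ≤
        Real.cos θ ^ n / (r ^ 2 + 2 * r * Real.cos θ + 1) ^ (n + 1) := by
  have mono : MonotoneOn (fun z : ℝ => z ^ n / (r ^ 2 + 2 * r * z + 1) ^ (n + 1))
      (Icc (0 : ℝ) 1) := by
    simp only [add_right_comm (r ^ 2) _ 1]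
    exact (monotoneOn_pow_div_add_mul_pow n.le_succ (by omega)).mono
      fun z hz => ⟨hz.1, two_mul_mul_mem_Ioc hr hz⟩
  refine ⟨mono, fun θ ⟨hθ₀, hθ⟩ => ?_⟩
  have sin_nonneg : 0 ≤ sin θ := sin_nonneg_of_nonneg_of_le_pi hθ₀ (by linarith [pi_pos])
  have sin_le_cos : sin θ ≤ cos θ := sin_le_cos_of_mem_Icc ⟨by linarith [pi_pos], hθ⟩
  exact mono ⟨sin_nonneg, sin_le_one θ⟩ ⟨sin_nonneg.trans sin_le_cos, cos_le_one θ⟩ sin_le_cos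

theorem stmt_6 (n : ℕ) (hn : 2 ≤ n) (r : ℝ) (hr : 0 < r) :
    MonotoneOn (fun z : ℝ => z ^ n / (r ^ 2 + 2 * r * z + 1) ^ (n + 1)) (Icc (0 : ℝ) 1) ∧
    ∀ θ : ℝ, θ ∈ Icc (0 : ℝ) (π / 4) →
      Real.sin θ ^ n / (r ^ 2 + 2 * r * Real.sin θ + 1) ^ (n + 1) ≤
        Real.cos θ ^ n / (r ^ 2 + 2 * r * Real.cos θ + 1) ^ (n + 1) :=
  stmt_6_general n (by omega) r (by linarith)
end

section
/- Let n ≥ 2 be an integer. There exists a constant C > 0 (depending only on n) such that for every ε ∈ (0,1): ∫₀^∞ ∫₀^∞ ε² r^{2n+3} / ( ((1+ε²r²)² + ε⁴τ²) (τ² + (1+r²)²)^{n+1} ) dτ dr ≤ C ε. -/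
open MeasureTheory Real Set

/-!
Since `(1 + ε²r²)² ≥ 2εr`, the first factor of the denominator costs only `ε² r / (2εr) = ε / 2`,
which is the whole dependence on `ε`. What remains is
`r ^ (2n+2) / (τ² + (1+r²)²) ^ (n+1)`. With `a = 1 + r²`, bounding `n` of the `n + 1` factors
below by `a²` and integrating the last one over `τ` leaves at most
`(π / 2) a ^ (n+1) / a ^ (2n+1) = (π / 2) a⁻ⁿ`, which is integrable in `r` as soon as `n ≥ 1`.
-/

lemma integrable_inv_sq_add_sq {a : ℝ} (ha : a ≠ 0) :
    Integrable fun x : ℝ => (x ^ 2 + a ^ 2)⁻¹ := by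
  have rescaled := (integrable_inv_one_add_sq.comp_div ha).const_mul (a ^ 2)⁻¹
  refine rescaled.congr (.of_forall fun x => ?_)
  field_simp
  ring

lemma integral_Ioi_inv_sq_add_sq (b : ℝ) {a : ℝ} (ha : 0 < a) :
    ∫ x in Ioi b, (x ^ 2 + a ^ 2)⁻¹ = a⁻¹ * (π / 2 - arctan (a⁻¹ * b)) := by
  calc ∫ x in Ioi b, (x ^ 2 + a ^ 2)⁻¹
      = ∫ x in Ioi b, (a ^ 2)⁻¹ * (1 + (a⁻¹ * x) ^ 2)⁻¹ := by
        congr! 2 with x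
        field_simp
        ring
    _ = (a ^ 2)⁻¹ * (a * (π / 2 - arctan (a⁻¹ * b))) := by
        rw [integral_const_mul,
          integral_comp_mul_left_Ioi (fun x => (1 + x ^ 2)⁻¹) b (inv_pos.mpr ha),
          integral_Ioi_inv_one_add_sq, inv_inv, smul_eq_mul]
    _ = a⁻¹ * (π / 2 - arctan (a⁻¹ * b)) := by field_simp

lemma inv_sq_add_sq_pow_succ_le (n : ℕ) {a : ℝ} (ha : a ≠ 0) (x : ℝ) :
    ((x ^ 2 + a ^ 2) ^ (n + 1))⁻¹ ≤ (a ^ (2 * n))⁻¹ * (x ^ 2 + a ^ 2)⁻¹ := by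
  rw [pow_succ, mul_inv, pow_mul]
  gcongr
  exact le_add_of_nonneg_left (sq_nonneg x)

lemma integrable_inv_sq_add_sq_pow_succ (n : ℕ) {a : ℝ} (ha : a ≠ 0) :
    Integrable fun x : ℝ => ((x ^ 2 + a ^ 2) ^ (n + 1))⁻¹ := by
  refine ((integrable_inv_sq_add_sq ha).const_mul (a ^ (2 * n))⁻¹).mono' (by fun_prop)
    (.of_forall fun x => ?_)
  rw [norm_of_nonneg (by positivity)]
  exact inv_sq_add_sq_pow_succ_le n ha x

lemma integral_Ioi_inv_sq_add_sq_pow_succ_le (n : ℕ) {a : ℝ} (ha : 0 < a) :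
    ∫ x in Ioi (0 : ℝ), ((x ^ 2 + a ^ 2) ^ (n + 1))⁻¹ ≤ π / 2 / a ^ (2 * n + 1) := by
  calc ∫ x in Ioi (0 : ℝ), ((x ^ 2 + a ^ 2) ^ (n + 1))⁻¹
      ≤ ∫ x in Ioi (0 : ℝ), (a ^ (2 * n))⁻¹ * (x ^ 2 + a ^ 2)⁻¹ :=
        integral_mono (integrable_inv_sq_add_sq_pow_succ n ha.ne').integrableOn
          ((integrable_inv_sq_add_sq ha.ne').const_mul _).integrableOn
          (inv_sq_add_sq_pow_succ_le n ha.ne')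
    _ = π / 2 / a ^ (2 * n + 1) := by
        rw [integral_const_mul, integral_Ioi_inv_sq_add_sq 0 ha, mul_zero, arctan_zero, sub_zero]
        ring

lemma pow_div_one_add_sq_pow_le_inv {n : ℕ} (hn : 1 ≤ n) (r : ℝ) :
    r ^ (2 * n + 2) / (1 + r ^ 2) ^ (2 * n + 1) ≤ (1 + r ^ 2)⁻¹ := by
  have one_le : 1 ≤ 1 + r ^ 2 := le_add_of_nonneg_right (sq_nonneg r)
  rw [div_le_iff₀ (by positivity), pow_succ' _ (2 * n), inv_mul_cancel_left₀ (by positivity)]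
  calc r ^ (2 * n + 2) = (r ^ 2) ^ (n + 1) := by ring
    _ ≤ (1 + r ^ 2) ^ (n + 1) := by gcongr; linarith
    _ ≤ (1 + r ^ 2) ^ (2 * n) := pow_le_pow_right₀ one_le (by omega)

lemma two_mul_le_one_add_sq_sq (x : ℝ) : 2 * x ≤ (1 + x ^ 2) ^ 2 := by
  nlinarith [sq_nonneg (x - 1), sq_nonneg (x ^ 2)]

lemma sq_mul_div_one_add_sq_sq_add_le {ε : ℝ} (hε : 0 ≤ ε) (r τ : ℝ) :
    ε ^ 2 * r / ((1 + ε ^ 2 * r ^ 2) ^ 2 + ε ^ 4 * τ ^ 2) ≤ ε / 2 := by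
  have le_denom : 2 * (ε * r) ≤ (1 + ε ^ 2 * r ^ 2) ^ 2 + ε ^ 4 * τ ^ 2 := by
    calc 2 * (ε * r) ≤ (1 + (ε * r) ^ 2) ^ 2 := two_mul_le_one_add_sq_sq _
      _ = (1 + ε ^ 2 * r ^ 2) ^ 2 := by rw [mul_pow]
      _ ≤ _ := le_add_of_nonneg_right (by positivity)
  rw [div_le_iff₀ (by positivity)]
  calc ε ^ 2 * r = ε / 2 * (2 * (ε * r)) := by ring
    _ ≤ _ := by gcongr

/-- The integrand of the double integral, at the point `(r, τ)`. Both factors of its denominator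
are positive for all real arguments, so the division is never by zero. -/
noncomputable def centerIntegrand (n : ℕ) (ε r τ : ℝ) : ℝ :=
  ε ^ 2 * r ^ (2 * n + 3) /
    (((1 + ε ^ 2 * r ^ 2) ^ 2 + ε ^ 4 * τ ^ 2) * (τ ^ 2 + (1 + r ^ 2) ^ 2) ^ (n + 1))

lemma centerIntegrand_nonneg (n : ℕ) (ε : ℝ) {r : ℝ} (hr : 0 ≤ r) (τ : ℝ) :
    0 ≤ centerIntegrand n ε r τ := by
  unfold centerIntegrand
  positivity

lemma centerIntegrand_le (n : ℕ) {ε : ℝ} (hε : 0 ≤ ε) (r τ : ℝ) :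
    centerIntegrand n ε r τ ≤
      ε / 2 * (r ^ (2 * n + 2) * ((τ ^ 2 + (1 + r ^ 2) ^ 2) ^ (n + 1))⁻¹) := by
  have even_pow_nonneg : 0 ≤ r ^ (2 * n + 2) := Even.pow_nonneg ⟨n + 1, by ring⟩ r
  calc centerIntegrand n ε r τ
      = ε ^ 2 * r / ((1 + ε ^ 2 * r ^ 2) ^ 2 + ε ^ 4 * τ ^ 2) *
          (r ^ (2 * n + 2) * ((τ ^ 2 + (1 + r ^ 2) ^ 2) ^ (n + 1))⁻¹) := by
        rw [centerIntegrand, pow_succ' r (2 * n + 2), ← mul_assoc, mul_div_mul_comm,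
          div_eq_mul_inv _ (_ ^ (n + 1))]
    _ ≤ _ := mul_le_mul_of_nonneg_right (sq_mul_div_one_add_sq_sq_add_le hε r τ) (by positivity)

lemma integral_Ioi_centerIntegrand_le {n : ℕ} (hn : 1 ≤ n) {ε : ℝ} (hε : 0 ≤ ε) {r : ℝ}
    (hr : 0 ≤ r) :
    ∫ τ in Ioi (0 : ℝ), centerIntegrand n ε r τ ≤ π / 4 * ε * (1 + r ^ 2)⁻¹ := by
  have ha : 0 < 1 + r ^ 2 := by positivity
  have majorant_integrable := (integrable_inv_sq_add_sq_pow_succ n ha.ne').integrableOn (s := Ioi 0)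
  calc ∫ τ in Ioi (0 : ℝ), centerIntegrand n ε r τ
      ≤ ∫ τ in Ioi (0 : ℝ),
          ε / 2 * (r ^ (2 * n + 2) * ((τ ^ 2 + (1 + r ^ 2) ^ 2) ^ (n + 1))⁻¹) :=
        integral_mono_of_nonneg (.of_forall (centerIntegrand_nonneg n ε hr))
          ((majorant_integrable.const_mul _).const_mul _)
          (.of_forall (centerIntegrand_le n hε r))
    _ ≤ ε / 2 * (r ^ (2 * n + 2) * (π / 2 / (1 + r ^ 2) ^ (2 * n + 1))) := by
        rw [integral_const_mul, integral_const_mul]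
        gcongr
        exact integral_Ioi_inv_sq_add_sq_pow_succ_le n ha
    _ = π / 4 * ε * (r ^ (2 * n + 2) / (1 + r ^ 2) ^ (2 * n + 1)) := by ring
    _ ≤ π / 4 * ε * (1 + r ^ 2)⁻¹ := by
        gcongr
        exact pow_div_one_add_sq_pow_le_inv hn r

theorem stmt_9_general {n : ℕ} (hn : 1 ≤ n) {ε : ℝ} (hε : 0 ≤ ε) :
    (∫ r in Ioi (0 : ℝ), ∫ τ in Ioi (0 : ℝ),
        ε ^ 2 * r ^ (2 * n + 3) /
          (((1 + ε ^ 2 * r ^ 2) ^ 2 + ε ^ 4 * τ ^ 2) *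
            (τ ^ 2 + (1 + r ^ 2) ^ 2) ^ (n + 1))) ≤ π ^ 2 / 8 * ε := by
  calc ∫ r in Ioi (0 : ℝ), ∫ τ in Ioi (0 : ℝ), centerIntegrand n ε r τ
      ≤ ∫ r in Ioi (0 : ℝ), π / 4 * ε * (1 + r ^ 2)⁻¹ := by
        refine integral_mono_of_nonneg ?_
          (integrable_inv_one_add_sq.const_mul _).integrableOn ?_
        all_goals filter_upwards [ae_restrict_mem measurableSet_Ioi] with r (hr : 0 < r)
        · exact integral_nonneg (centerIntegrand_nonneg n ε hr.le)
        · exact integral_Ioi_centerIntegrand_le hn hε hr.le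
    _ = π ^ 2 / 8 * ε := by
        rw [integral_const_mul, integral_Ioi_inv_one_add_sq, arctan_zero]
        ring

theorem stmt_9 (n : ℕ) (hn : 2 ≤ n) :
    ∃ C : ℝ, 0 < C ∧ ∀ ε : ℝ, ε ∈ Ioo (0 : ℝ) 1 →
      (∫ r in Ioi (0 : ℝ), ∫ τ in Ioi (0 : ℝ),
          ε ^ 2 * r ^ (2 * n + 3) /
            (((1 + ε ^ 2 * r ^ 2) ^ 2 + ε ^ 4 * τ ^ 2) *
              (τ ^ 2 + (1 + r ^ 2) ^ 2) ^ (n + 1))) ≤ C * ε :=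
  ⟨π ^ 2 / 8, by positivity, fun _ hε => stmt_9_general (one_le_two.trans hn) hε.1.le⟩
end

section
/- Let n ≥ 2 be an integer. There exists a constant C > 0 (depending only on n) such that for every ε ∈ (0,1): ∫₀^∞ ∫₀^∞ ε⁴ r^{2n+5} / ( ((1+ε²r²)² + ε⁴τ²) (τ² + (1+r²)²)^{n+1} ) dτ dr ≤ C ε. -/
open MeasureTheory Real Set

/-!
Put `b = 1 + r ^ 2`. Since `r ^ 2 ≤ b`, `1 ≤ b` and `n + 2 ≤ 2 * n + 1`, we have
`r ^ (2 * n + 4) ≤ b ^ (2 * n + 1) ≤ b * (τ ^ 2 + b ^ 2) ^ n`. Dropping `ε ^ 4 * τ ^ 2`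
from the other factor of the denominator, the integrand is thus at most
`ε ^ 4 * r / (1 + ε ^ 2 * r ^ 2) ^ 2` times the Poisson kernel `b / (τ ^ 2 + b ^ 2)`, whose
`τ`-integral is `π / 2` whatever `b > 0` is. The remaining `r`-integral is `ε ^ 2 / 2`.
-/

open Filter Topology

section PoissonKernel

variable {b : ℝ}

lemma div_sq_add_sq_eq_inv_mul_inv_one_add_sq (hb : b ≠ 0) (t : ℝ) :
    b / (t ^ 2 + b ^ 2) = b⁻¹ * (1 + (b⁻¹ * t) ^ 2)⁻¹ := by
  field

lemma integrable_div_sq_add_sq (hb : b ≠ 0) : Integrable (fun t : ℝ ↦ b / (t ^ 2 + b ^ 2)) := by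
  simp only [div_sq_add_sq_eq_inv_mul_inv_one_add_sq hb]
  exact (integrable_inv_one_add_sq.comp_mul_left' (inv_ne_zero hb)).const_mul b⁻¹

lemma integral_Ioi_div_sq_add_sq (hb : 0 < b) :
    ∫ t in Ioi (0 : ℝ), b / (t ^ 2 + b ^ 2) = π / 2 := by
  simp only [div_sq_add_sq_eq_inv_mul_inv_one_add_sq hb.ne']
  rw [integral_const_mul, integral_comp_mul_left_Ioi (fun x ↦ (1 + x ^ 2)⁻¹) 0 (inv_pos.2 hb),
    mul_zero, integral_Ioi_inv_one_add_sq, arctan_zero, sub_zero, inv_inv, smul_eq_mul,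
    inv_mul_cancel_left₀ hb.ne']

end PoissonKernel

section RationalIntegral

variable {c : ℝ}

lemma hasDerivAt_neg_inv_one_add_mul_sq (hc : 0 ≤ c) (x : ℝ) :
    HasDerivAt (fun y : ℝ ↦ -(c / 2 * (1 + c * y ^ 2)⁻¹))
      (c ^ 2 * x / (1 + c * x ^ 2) ^ 2) x := by
  have h_den : HasDerivAt (fun y : ℝ ↦ 1 + c * y ^ 2) (c * (2 * x)) x := by
    simpa using ((hasDerivAt_pow 2 x).const_mul c).const_add 1
  exact ((h_den.fun_inv (by positivity)).const_mul (c / 2)).fun_neg.congr_deriv (by ring)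

lemma tendsto_neg_inv_one_add_mul_sq_atTop (hc : 0 < c) :
    Tendsto (fun y : ℝ ↦ -(c / 2 * (1 + c * y ^ 2)⁻¹)) atTop (𝓝 0) := by
  have h_den : Tendsto (fun y : ℝ ↦ 1 + c * y ^ 2) atTop atTop :=
    tendsto_atTop_add_const_left _ 1 ((tendsto_pow_atTop two_ne_zero).const_mul_atTop hc)
  simpa using (h_den.inv_tendsto_atTop.const_mul (c / 2)).neg

lemma integrableOn_Ioi_mul_div_one_add_mul_sq_sq (hc : 0 < c) :
    IntegrableOn (fun x : ℝ ↦ c ^ 2 * x / (1 + c * x ^ 2) ^ 2) (Ioi 0) :=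
  integrableOn_Ioi_deriv_of_nonneg' (fun x _ ↦ hasDerivAt_neg_inv_one_add_mul_sq hc.le x)
    (fun x (hx : 0 < x) ↦ by positivity) (tendsto_neg_inv_one_add_mul_sq_atTop hc)

lemma integral_Ioi_mul_div_one_add_mul_sq_sq (hc : 0 < c) :
    ∫ x in Ioi (0 : ℝ), c ^ 2 * x / (1 + c * x ^ 2) ^ 2 = c / 2 := by
  rw [integral_Ioi_of_hasDerivAt_of_nonneg' (fun x _ ↦ hasDerivAt_neg_inv_one_add_mul_sq hc.le x)
    (fun x (hx : 0 < x) ↦ by positivity) (tendsto_neg_inv_one_add_mul_sq_atTop hc)]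
  simp

end RationalIntegral

lemma pow_div_sq_add_sq_pow_le {n : ℕ} (hn : 1 ≤ n) {r b : ℝ} (hr : 0 ≤ r) (hb : 1 ≤ b)
    (hrb : r ^ 2 ≤ b) (t : ℝ) :
    r ^ (2 * n + 5) / (t ^ 2 + b ^ 2) ^ (n + 1) ≤ r * (b / (t ^ 2 + b ^ 2)) := by
  have h_pow : r ^ (2 * n + 4) ≤ b * (t ^ 2 + b ^ 2) ^ n := calc
    r ^ (2 * n + 4) = (r ^ 2) ^ (n + 2) := by ring
    _ ≤ b ^ (n + 2) := by gcongr
    _ ≤ b ^ (2 * n + 1) := pow_le_pow_right₀ hb (by lia)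
    _ = b * (b ^ 2) ^ n := by ring
    _ ≤ b * (t ^ 2 + b ^ 2) ^ n := by gcongr; exact le_add_of_nonneg_left (sq_nonneg t)
  rw [← mul_div_assoc, div_le_div_iff₀ (by positivity) (by positivity)]
  calc r ^ (2 * n + 5) * (t ^ 2 + b ^ 2) = r * r ^ (2 * n + 4) * (t ^ 2 + b ^ 2) := by ring
    _ ≤ r * (b * (t ^ 2 + b ^ 2) ^ n) * (t ^ 2 + b ^ 2) := by gcongr
    _ = r * b * (t ^ 2 + b ^ 2) ^ (n + 1) := by ring

lemma integrand_le_mul_poissonKernel {n : ℕ} (hn : 1 ≤ n) (ε : ℝ) {r : ℝ} (hr : 0 ≤ r) (τ : ℝ) :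
    ε ^ 4 * r ^ (2 * n + 5) /
        (((1 + ε ^ 2 * r ^ 2) ^ 2 + ε ^ 4 * τ ^ 2) * (τ ^ 2 + (1 + r ^ 2) ^ 2) ^ (n + 1)) ≤
      (ε ^ 2) ^ 2 * r / (1 + ε ^ 2 * r ^ 2) ^ 2 * ((1 + r ^ 2) / (τ ^ 2 + (1 + r ^ 2) ^ 2)) := calc
  _ = ε ^ 4 / ((1 + ε ^ 2 * r ^ 2) ^ 2 + ε ^ 4 * τ ^ 2) *
        (r ^ (2 * n + 5) / (τ ^ 2 + (1 + r ^ 2) ^ 2) ^ (n + 1)) := mul_div_mul_comm ..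
  _ ≤ ε ^ 4 / (1 + ε ^ 2 * r ^ 2) ^ 2 *
        (r * ((1 + r ^ 2) / (τ ^ 2 + (1 + r ^ 2) ^ 2))) := by
    gcongr
    · exact le_add_of_nonneg_right (by positivity)
    · exact pow_div_sq_add_sq_pow_le hn hr (by linarith [sq_nonneg r]) (by linarith) τ
  _ = _ := by ring

lemma integral_Ioi_integrand_le {n : ℕ} (hn : 1 ≤ n) (ε : ℝ) {r : ℝ} (hr : 0 ≤ r) :
    ∫ τ in Ioi (0 : ℝ), ε ^ 4 * r ^ (2 * n + 5) /
        (((1 + ε ^ 2 * r ^ 2) ^ 2 + ε ^ 4 * τ ^ 2) * (τ ^ 2 + (1 + r ^ 2) ^ 2) ^ (n + 1)) ≤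
      (ε ^ 2) ^ 2 * r / (1 + ε ^ 2 * r ^ 2) ^ 2 * (π / 2) := by
  have hb : 0 < 1 + r ^ 2 := by positivity
  rw [← integral_Ioi_div_sq_add_sq hb, ← integral_const_mul]
  exact setIntegral_mono_of_nonneg (fun τ _ ↦ by positivity)
    (fun τ _ ↦ integrand_le_mul_poissonKernel hn ε hr τ)
    ((integrable_div_sq_add_sq hb.ne').const_mul _).integrableOn

theorem stmt_10_general (n : ℕ) (hn : 1 ≤ n) (ε : ℝ) :
    (∫ r in Ioi (0 : ℝ), ∫ τ in Ioi (0 : ℝ),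
        ε ^ 4 * r ^ (2 * n + 5) /
          (((1 + ε ^ 2 * r ^ 2) ^ 2 + ε ^ 4 * τ ^ 2) *
            (τ ^ 2 + (1 + r ^ 2) ^ 2) ^ (n + 1))) ≤ π / 4 * ε ^ 2 := by
  rcases eq_or_ne ε 0 with rfl | hε
  · simp
  have hε2 : 0 < ε ^ 2 := by positivity
  calc
    _ ≤ ∫ r in Ioi (0 : ℝ), (ε ^ 2) ^ 2 * r / (1 + ε ^ 2 * r ^ 2) ^ 2 * (π / 2) :=
      setIntegral_mono_of_nonneg
        (fun r (hr : 0 < r) ↦ integral_nonneg fun τ ↦ by positivity)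
        (fun r (hr : 0 < r) ↦ integral_Ioi_integrand_le hn ε hr.le)
        ((integrableOn_Ioi_mul_div_one_add_mul_sq_sq hε2).mul_const _)
    _ = ε ^ 2 / 2 * (π / 2) := by
      rw [integral_mul_const, integral_Ioi_mul_div_one_add_mul_sq_sq hε2]
    _ = π / 4 * ε ^ 2 := by ring

theorem stmt_10 (n : ℕ) (hn : 2 ≤ n) :
    ∃ C : ℝ, 0 < C ∧ ∀ ε : ℝ, ε ∈ Ioo (0 : ℝ) 1 →
      (∫ r in Ioi (0 : ℝ), ∫ τ in Ioi (0 : ℝ),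
          ε ^ 4 * r ^ (2 * n + 5) /
            (((1 + ε ^ 2 * r ^ 2) ^ 2 + ε ^ 4 * τ ^ 2) *
              (τ ^ 2 + (1 + r ^ 2) ^ 2) ^ (n + 1))) ≤ C * ε := by
  refine ⟨π / 4, by positivity, fun ε hε ↦ (stmt_10_general n (by lia) ε).trans ?_⟩
  exact mul_le_mul_of_nonneg_left (pow_le_of_le_one hε.1.le hε.2.le two_ne_zero) (by positivity)
end

section
/- Let n ≥ 2 be an integer. There exists a constant C > 0 (depending only on n) such that for every ε ∈ (0,1): ∫₀^∞ ∫₀^∞ ε⁴ τ² r^{2n+1} / ( ((1+ε²r²)² + ε⁴τ²) (τ² + (1+r²)²)^{n+1} ) dτ dr ≤ C ε. -/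
open MeasureTheory Real Set

/-!
With `x = ε² τ`, the factor `x² / ((1 + ε² r²)² + x²)` is at most `min 1 x²`, hence at most `x ^ θ`
for every `θ ∈ [0, 2]`; this yields the rate `(ε ^ 2) ^ θ`. What remains is
`τ ^ θ * r ^ (2 * n + 1) / (τ² + (1 + r²)²) ^ (n + 1)`. Since `τ² + (1 + r²)²` dominates both
`1 + τ²` and `(1 + r²)²`, its power can be shared between the two variables. Counting exponents,
this bounds the quotient by `(1 + r²) ^ (-s) * (1 + τ²) ^ (-s)` as soon as
`3 * s + θ ≤ n + 3 / 2`, and an integrable choice `s > 1 / 2` exists exactly when `θ < n`.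
The case `θ = 1 / 2` gives the rate `ε`.
-/

/-- The integrand of the double integral estimated in the asymptotics of the center of mass, as a
function of the pair `(r, τ)`, so that integrability refers to the product measure. -/
noncomputable def centerOfMassIntegrand (n : ℕ) (ε : ℝ) (p : ℝ × ℝ) : ℝ :=
  ε ^ 4 * p.2 ^ 2 * p.1 ^ (2 * n + 1) /
    (((1 + ε ^ 2 * p.1 ^ 2) ^ 2 + ε ^ 4 * p.2 ^ 2) * (p.2 ^ 2 + (1 + p.1 ^ 2) ^ 2) ^ (n + 1))

lemma sq_div_sq_add_sq_le_rpow {x y θ : ℝ} (hx : 0 ≤ x) (hy : 1 ≤ y) (hθ : θ ∈ Icc (0 : ℝ) 2) :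
    x ^ 2 / (y ^ 2 + x ^ 2) ≤ x ^ θ := by
  have hy2 : 1 ≤ y ^ 2 := one_le_pow₀ hy
  rcases le_total x 1 with hx1 | hx1
  · calc x ^ 2 / (y ^ 2 + x ^ 2) ≤ x ^ 2 := div_le_self (sq_nonneg x) (by nlinarith)
      _ = x ^ (2 : ℝ) := (rpow_two x).symm
      _ ≤ x ^ θ := rpow_le_rpow_of_exponent_ge' hx hx1 hθ.1 hθ.2
  · calc x ^ 2 / (y ^ 2 + x ^ 2) ≤ 1 := div_le_one_of_le₀ (by linarith) (by positivity)
      _ ≤ x ^ θ := one_le_rpow hx1 hθ.1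

lemma rpow_le_one_add_sq_rpow {x a : ℝ} (hx : 0 ≤ x) (ha : 0 ≤ a) :
    x ^ a ≤ (1 + x ^ 2) ^ (a / 2) := by
  calc x ^ a = (x ^ 2) ^ (a / 2) := by
        rw [← rpow_natCast_mul hx, Nat.cast_ofNat, mul_div_cancel₀ a two_ne_zero]
    _ ≤ (1 + x ^ 2) ^ (a / 2) := by gcongr; linarith

lemma one_add_sq_rpow_mul_le {a b : ℝ} (ha : 0 ≤ a) (hb : 0 ≤ b) (r τ : ℝ) :
    (1 + r ^ 2) ^ a * (1 + τ ^ 2) ^ b ≤ (τ ^ 2 + (1 + r ^ 2) ^ 2) ^ (a / 2 + b) := by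
  have hr : 1 ≤ (1 + r ^ 2) ^ 2 := one_le_pow₀ (by nlinarith)
  calc (1 + r ^ 2) ^ a * (1 + τ ^ 2) ^ b
      = ((1 + r ^ 2) ^ 2) ^ (a / 2) * (1 + τ ^ 2) ^ b := by
        rw [← rpow_natCast_mul (by positivity), Nat.cast_ofNat, mul_div_cancel₀ a two_ne_zero]
    _ ≤ (τ ^ 2 + (1 + r ^ 2) ^ 2) ^ (a / 2) * (τ ^ 2 + (1 + r ^ 2) ^ 2) ^ b := by
        gcongr ?_ ^ _ * ?_ ^ _ <;> nlinarith
    _ = (τ ^ 2 + (1 + r ^ 2) ^ 2) ^ (a / 2 + b) := (rpow_add (by positivity) _ _).symm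

lemma rpow_mul_pow_div_le {n : ℕ} {θ s r τ : ℝ} (hθ : 0 ≤ θ) (hs : 0 ≤ s)
    (hsθ : 3 * s + θ ≤ n + 3 / 2) (hr : 0 ≤ r) (hτ : 0 ≤ τ) :
    τ ^ θ * r ^ (2 * n + 1) / (τ ^ 2 + (1 + r ^ 2) ^ 2) ^ (n + 1) ≤
      (1 + r ^ 2) ^ (-s) * (1 + τ ^ 2) ^ (-s) := by
  have hr_pow : r ^ (2 * n + 1) ≤ (1 + r ^ 2) ^ (n + 1 / 2 : ℝ) := by
    convert rpow_le_one_add_sq_rpow (a := (2 * n + 1 : ℕ)) hr (by positivity) using 1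
    · rw [rpow_natCast]
    · push_cast; ring_nf
  rw [rpow_neg (by positivity), rpow_neg (by positivity), ← mul_inv, ← one_div,
    div_le_div_iff₀ (by positivity) (by positivity), one_mul]
  calc τ ^ θ * r ^ (2 * n + 1) * ((1 + r ^ 2) ^ s * (1 + τ ^ 2) ^ s)
      ≤ (1 + τ ^ 2) ^ (θ / 2) * (1 + r ^ 2) ^ (n + 1 / 2 : ℝ) *
          ((1 + r ^ 2) ^ s * (1 + τ ^ 2) ^ s) := by
        gcongr
        exact rpow_le_one_add_sq_rpow hτ hθ
    _ = (1 + r ^ 2) ^ (n + 1 / 2 + s) * (1 + τ ^ 2) ^ (θ / 2 + s) := by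
        rw [rpow_add (by positivity) (n + 1 / 2 : ℝ), rpow_add (by positivity) (θ / 2)]
        ring
    _ ≤ (τ ^ 2 + (1 + r ^ 2) ^ 2) ^ ((n + 1 / 2 + s) / 2 + (θ / 2 + s)) :=
        one_add_sq_rpow_mul_le (by positivity) (by positivity) r τ
    _ ≤ (τ ^ 2 + (1 + r ^ 2) ^ 2) ^ ((n + 1 : ℕ) : ℝ) := by
        gcongr
        · nlinarith
        · push_cast
          linarith
    _ = (τ ^ 2 + (1 + r ^ 2) ^ 2) ^ (n + 1) := rpow_natCast _ _

lemma integrable_one_add_sq_rpow_neg {s : ℝ} (hs : 1 / 2 < s) :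
    Integrable fun x : ℝ ↦ (1 + x ^ 2) ^ (-s) := by
  simpa [neg_div] using integrable_rpow_neg_one_add_norm_sq (E := ℝ) (μ := volume) (r := 2 * s)
    (by rw [Module.finrank_self]; push_cast; linarith)

lemma integrable_one_add_sq_rpow_neg_mul {s : ℝ} (hs : 1 / 2 < s) :
    Integrable fun p : ℝ × ℝ ↦ (1 + p.1 ^ 2) ^ (-s) * (1 + p.2 ^ 2) ^ (-s) :=
  (integrable_one_add_sq_rpow_neg hs).mul_prod (integrable_one_add_sq_rpow_neg hs)

namespace centerOfMassIntegrand

lemma nonneg (n : ℕ) (ε : ℝ) {p : ℝ × ℝ} (hp : 0 ≤ p.1) : 0 ≤ centerOfMassIntegrand n ε p := by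
  unfold centerOfMassIntegrand
  positivity

lemma le_sq_rpow_mul {n : ℕ} {θ s ε : ℝ} (hθ : θ ∈ Icc (0 : ℝ) 2) (hs : 0 ≤ s)
    (hsθ : 3 * s + θ ≤ n + 3 / 2) {p : ℝ × ℝ} (hr : 0 ≤ p.1) (hτ : 0 ≤ p.2) :
    centerOfMassIntegrand n ε p ≤
      (ε ^ 2) ^ θ * ((1 + p.1 ^ 2) ^ (-s) * (1 + p.2 ^ 2) ^ (-s)) := by
  obtain ⟨r, τ⟩ := p
  have hweight : (ε ^ 2 * τ) ^ 2 / ((1 + ε ^ 2 * r ^ 2) ^ 2 + (ε ^ 2 * τ) ^ 2) ≤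
      (ε ^ 2 * τ) ^ θ :=
    sq_div_sq_add_sq_le_rpow (by positivity) (le_add_of_nonneg_right (by positivity)) hθ
  calc centerOfMassIntegrand n ε (r, τ)
      = (ε ^ 2 * τ) ^ 2 / ((1 + ε ^ 2 * r ^ 2) ^ 2 + (ε ^ 2 * τ) ^ 2) *
          (r ^ (2 * n + 1) / (τ ^ 2 + (1 + r ^ 2) ^ 2) ^ (n + 1)) := by
        rw [div_mul_div_comm, centerOfMassIntegrand]
        ring_nf
    _ ≤ (ε ^ 2 * τ) ^ θ * (r ^ (2 * n + 1) / (τ ^ 2 + (1 + r ^ 2) ^ 2) ^ (n + 1)) := by gcongr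
    _ = (ε ^ 2) ^ θ * (τ ^ θ * r ^ (2 * n + 1) / (τ ^ 2 + (1 + r ^ 2) ^ 2) ^ (n + 1)) := by
        rw [mul_rpow (sq_nonneg ε) hτ]
        ring
    _ ≤ (ε ^ 2) ^ θ * ((1 + r ^ 2) ^ (-s) * (1 + τ ^ 2) ^ (-s)) := by
        gcongr
        exact rpow_mul_pow_div_le hθ.1 hs hsθ hr hτ

lemma integrableOn {n : ℕ} (hn : n ≠ 0) (ε : ℝ) :
    IntegrableOn (centerOfMassIntegrand n ε) (Ioi 0 ×ˢ Ioi 0) := by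
  have hn_pos : (0 : ℝ) < n := by positivity
  have hmajorant := integrable_one_add_sq_rpow_neg_mul (s := 1 / 2 + n / 3) (by linarith)
  refine hmajorant.integrableOn.mono' ?_ ?_
  · have hmeas : Measurable (centerOfMassIntegrand n ε) := by
      unfold centerOfMassIntegrand
      fun_prop
    exact hmeas.aestronglyMeasurable
  · filter_upwards [ae_restrict_mem (measurableSet_Ioi.prod measurableSet_Ioi)] with p hp
    rw [norm_of_nonneg (nonneg n ε hp.1.le)]
    simpa using le_sq_rpow_mul (n := n) (θ := 0) (s := 1 / 2 + n / 3) (ε := ε) (by norm_num)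
      (by positivity) (by linarith) hp.1.le hp.2.le

lemma setIntegral_le {n : ℕ} {θ s : ℝ} (hθ : θ ∈ Icc (0 : ℝ) 2) (hs : 1 / 2 < s)
    (hsθ : 3 * s + θ ≤ n + 3 / 2) (ε : ℝ) :
    ∫ p in Ioi 0 ×ˢ Ioi 0, centerOfMassIntegrand n ε p ≤
      (ε ^ 2) ^ θ * (∫ x in Ioi (0 : ℝ), (1 + x ^ 2) ^ (-s)) ^ 2 := by
  have hn : n ≠ 0 := Nat.cast_pos (α := ℝ).mp (by linarith [hθ.1]) |>.ne'
  calc ∫ p in Ioi 0 ×ˢ Ioi 0, centerOfMassIntegrand n ε p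
      ≤ ∫ p in Ioi (0 : ℝ) ×ˢ Ioi (0 : ℝ),
          (ε ^ 2) ^ θ * ((1 + p.1 ^ 2) ^ (-s) * (1 + p.2 ^ 2) ^ (-s)) :=
        setIntegral_mono_on (integrableOn hn ε)
          ((integrable_one_add_sq_rpow_neg_mul hs).const_mul _).integrableOn
          (measurableSet_Ioi.prod measurableSet_Ioi)
          fun p hp ↦ le_sq_rpow_mul hθ (by linarith) hsθ hp.1.le hp.2.le
    _ = (ε ^ 2) ^ θ * (∫ x in Ioi (0 : ℝ), (1 + x ^ 2) ^ (-s)) ^ 2 := by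
        rw [integral_const_mul]
        congr 1
        exact (setIntegral_prod_mul (fun r : ℝ ↦ (1 + r ^ 2) ^ (-s))
          (fun τ : ℝ ↦ (1 + τ ^ 2) ^ (-s)) _ _).trans (sq _).symm

end centerOfMassIntegrand

theorem stmt_12_general {n : ℕ} {θ : ℝ} (hθ : θ ∈ Icc (0 : ℝ) 2) (hθn : θ < n) :
    ∃ C : ℝ, 0 < C ∧ ∀ ε : ℝ,
      IntegrableOn (centerOfMassIntegrand n ε) (Ioi 0 ×ˢ Ioi 0) ∧
      ∫ r in Ioi (0 : ℝ), ∫ τ in Ioi (0 : ℝ), centerOfMassIntegrand n ε (r, τ) ≤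
        C * (ε ^ 2) ^ θ := by
  have hn : n ≠ 0 := Nat.cast_pos.mp (hθ.1.trans_lt hθn) |>.ne'
  obtain ⟨s, hs, hsθ⟩ : ∃ s : ℝ, 1 / 2 < s ∧ 3 * s + θ ≤ n + 3 / 2 :=
    ⟨1 / 2 + (n - θ) / 3, by linarith, by linarith⟩
  refine ⟨(∫ x in Ioi (0 : ℝ), (1 + x ^ 2) ^ (-s)) ^ 2 + 1, by positivity, fun ε ↦ ?_⟩
  have hint := centerOfMassIntegrand.integrableOn hn ε
  refine ⟨hint, ?_⟩
  calc ∫ r in Ioi (0 : ℝ), ∫ τ in Ioi (0 : ℝ), centerOfMassIntegrand n ε (r, τ)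
      = ∫ p in Ioi 0 ×ˢ Ioi 0, centerOfMassIntegrand n ε p := (setIntegral_prod _ hint).symm
    _ ≤ (ε ^ 2) ^ θ * (∫ x in Ioi (0 : ℝ), (1 + x ^ 2) ^ (-s)) ^ 2 :=
        centerOfMassIntegrand.setIntegral_le hθ hs hsθ ε
    _ ≤ ((∫ x in Ioi (0 : ℝ), (1 + x ^ 2) ^ (-s)) ^ 2 + 1) * (ε ^ 2) ^ θ := by
        rw [mul_comm]
        gcongr
        exact le_add_of_nonneg_right zero_le_one

theorem stmt_12 (n : ℕ) (hn : 2 ≤ n) :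
    ∃ C : ℝ, 0 < C ∧ ∀ ε : ℝ, ε ∈ Ioo (0 : ℝ) 1 →
      (∫ r in Ioi (0 : ℝ), ∫ τ in Ioi (0 : ℝ),
          ε ^ 4 * τ ^ 2 * r ^ (2 * n + 1) /
            (((1 + ε ^ 2 * r ^ 2) ^ 2 + ε ^ 4 * τ ^ 2) *
              (τ ^ 2 + (1 + r ^ 2) ^ 2) ^ (n + 1))) ≤ C * ε := by
  obtain ⟨C, hC, hbound⟩ := stmt_12_general (n := n) (θ := 1 / 2) (by norm_num)
    (lt_of_lt_of_le (by norm_num) (Nat.ofNat_le_cast.mpr hn))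
  exact ⟨C, hC, fun ε hε ↦ by
    simpa only [centerOfMassIntegrand, ← sqrt_eq_rpow, sqrt_sq hε.1.le] using (hbound ε).2⟩
end

section
/- Let n ≥ 2 be an integer. Then, as ε → 0⁺, ∫_{ℂ^n×ℝ} (ε²(|z|⁴ + τ²) + |z|²) / ( ((1+ε²|z|²)² + ε⁴τ²) (τ² + (1+|z|²)²)^{n+1} ) dz dτ converges to ∫_{ℂ^n×ℝ} |z|² / (τ² + (1+|z|²)²)^{n+1} dz dτ. In particular the left-hand integral is finite for every ε ∈ (0,1) and equals the right-hand integral up to an error that tends to 0 as ε → 0⁺. -/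
open MeasureTheory Real Set Filter

/-!
With `w = |z|² + iτ`, the integrand is the real part of `w / (1 + ε² w)` divided by
`|1 + w| ^ (2n + 2)`. Since `Re w ≥ 0`, the factor `(1 + ε² w)⁻¹` has modulus at most one, and it
tends to one as `ε → 0`; dominated convergence therefore reduces everything to the integrability of
`w / |1 + w| ^ (2n + 2)`, which is `O(|1 + w| ^ (-(2n + 1)))`.
-/

open scoped Topology

section Damping

theorem one_le_norm_one_add_mul {w : ℂ} (hw : 0 ≤ w.re) {δ : ℝ} (hδ : 0 ≤ δ) :
    1 ≤ ‖1 + δ * w‖ :=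
  calc (1 : ℝ) ≤ 1 + δ * w.re := le_add_of_nonneg_right (mul_nonneg hδ hw)
    _ = (1 + δ * w).re := by simp
    _ ≤ ‖1 + δ * w‖ := Complex.re_le_norm _

theorem norm_div_one_add_mul_le {w : ℂ} (hw : 0 ≤ w.re) {δ : ℝ} (hδ : 0 ≤ δ) (c : ℂ) :
    ‖c / (1 + δ * w)‖ ≤ ‖c‖ := by
  rw [norm_div]
  exact div_le_self (norm_nonneg c) (one_le_norm_one_add_mul hw hδ)

theorem re_div_one_add_mul (w : ℂ) (δ : ℝ) :
    (w / (1 + δ * w)).re =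
      (δ * (w.re ^ 2 + w.im ^ 2) + w.re) / ((1 + δ * w.re) ^ 2 + δ ^ 2 * w.im ^ 2) := by
  rw [Complex.div_re, ← add_div, Complex.normSq_apply]
  simp only [Complex.add_re, Complex.one_re, Complex.mul_re, Complex.ofReal_re,
    Complex.ofReal_im, zero_mul, sub_zero, Complex.add_im, Complex.one_im, Complex.mul_im, add_zero,
    zero_add]
  ring_nf

theorem norm_le_norm_one_add {w : ℂ} (hw : 0 ≤ w.re) : ‖w‖ ≤ ‖1 + w‖ := by
  rw [← sq_le_sq₀ (norm_nonneg _) (norm_nonneg _), Complex.sq_norm, Complex.sq_norm,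
    Complex.normSq_apply, Complex.normSq_apply]
  simp only [Complex.add_re, Complex.one_re, Complex.add_im, Complex.one_im, zero_add]
  nlinarith

theorem norm_div_norm_one_add_pow_le {w : ℂ} (hw : 0 ≤ w.re) (k : ℕ) :
    ‖w / ‖1 + w‖ ^ k‖ ≤ ‖1 + w‖ ^ (1 - k : ℝ) := by
  have hpos : 0 < ‖1 + w‖ := by
    simpa using zero_lt_one.trans_le (one_le_norm_one_add_mul hw zero_le_one)
  calc ‖w / ‖1 + w‖ ^ k‖ = ‖w‖ / ‖1 + w‖ ^ k := by simp
    _ ≤ ‖1 + w‖ / ‖1 + w‖ ^ k := by gcongr; exact norm_le_norm_one_add hw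
    _ = ‖1 + w‖ ^ (1 - k : ℝ) := by rw [rpow_sub hpos, rpow_one, rpow_natCast]

variable {X : Type*} [MeasurableSpace X] {μ : Measure X} {w G : X → ℂ}

theorem integrable_div_one_add_mul (hw : AEStronglyMeasurable w μ) (hre : ∀ᵐ x ∂μ, 0 ≤ (w x).re)
    (hG : Integrable G μ) {δ : ℝ} (hδ : 0 ≤ δ) :
    Integrable (fun x => G x / (1 + δ * w x)) μ :=
  hG.mono (hG.aestronglyMeasurable.div₀ (by fun_prop))
    (hre.mono fun x hx => norm_div_one_add_mul_le hx hδ (G x))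

theorem tendsto_integral_div_one_add_mul (hw : AEStronglyMeasurable w μ)
    (hre : ∀ᵐ x ∂μ, 0 ≤ (w x).re) (hG : Integrable G μ) :
    Tendsto (fun δ : ℝ => ∫ x, G x / (1 + δ * w x) ∂μ) (𝓝[≥] 0) (𝓝 (∫ x, G x ∂μ)) := by
  refine tendsto_integral_filter_of_dominated_convergence (fun x => ‖G x‖) ?_ ?_ hG.norm ?_
  · filter_upwards [self_mem_nhdsWithin] with δ hδ
    exact (integrable_div_one_add_mul hw hre hG hδ).aestronglyMeasurable
  · filter_upwards [self_mem_nhdsWithin] with δ hδ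
    exact hre.mono fun x hx => norm_div_one_add_mul_le hx hδ (G x)
  · refine .of_forall fun x => ?_
    have hcont : ContinuousAt (fun δ : ℝ => G x / (1 + δ * w x)) 0 :=
      ContinuousAt.div (by fun_prop) (by fun_prop) (by simp)
    simpa using hcont.tendsto.mono_left nhdsWithin_le_nhds

end Damping

section SiegelCoord

variable {E : Type*}

/-- The complex coordinate `q z + iτ` of `(z, τ) ∈ E × ℝ`. For `E = ℂⁿ` and `q z = |z|²` it is, up
to a factor `i`, the transverse coordinate in the realization of the Heisenberg group as the
boundary of the Siegel domain. -/
noncomputable def siegelCoord (q : E → ℝ) (p : E × ℝ) : ℂ := q p.1 + p.2 * Complex.I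

@[simp]
theorem siegelCoord_re (q : E → ℝ) (p : E × ℝ) : (siegelCoord q p).re = q p.1 := by
  simp [siegelCoord]

@[simp]
theorem siegelCoord_im (q : E → ℝ) (p : E × ℝ) : (siegelCoord q p).im = p.2 := by
  simp [siegelCoord]

theorem norm_one_add_siegelCoord_sq (q : E → ℝ) (p : E × ℝ) :
    ‖1 + siegelCoord q p‖ ^ 2 = p.2 ^ 2 + (1 + q p.1) ^ 2 := by
  rw [Complex.sq_norm, Complex.normSq_apply]
  simp only [Complex.add_re, Complex.one_re, siegelCoord_re, Complex.add_im, Complex.one_im,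
    siegelCoord_im, zero_add]
  ring

theorem measurable_siegelCoord [MeasurableSpace E] {q : E → ℝ} (hq : Measurable q) :
    Measurable (siegelCoord q) := by
  unfold siegelCoord
  fun_prop

theorem re_siegelCoord_div_norm_pow_div (q : E → ℝ) (k : ℕ) (ε : ℝ) (p : E × ℝ) :
    (siegelCoord q p / ‖1 + siegelCoord q p‖ ^ (2 * k) /
        (1 + (ε ^ 2 : ℝ) * siegelCoord q p)).re =
      (ε ^ 2 * (q p.1 ^ 2 + p.2 ^ 2) + q p.1) /
        (((1 + ε ^ 2 * q p.1) ^ 2 + ε ^ 4 * p.2 ^ 2) * (p.2 ^ 2 + (1 + q p.1) ^ 2) ^ k) := by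
  rw [div_right_comm, ← Complex.ofReal_pow, Complex.div_ofReal_re, re_div_one_add_mul, pow_mul,
    norm_one_add_siegelCoord_sq, siegelCoord_re, siegelCoord_im, div_div, ← pow_mul]

theorem re_siegelCoord_div_norm_pow (q : E → ℝ) (k : ℕ) (p : E × ℝ) :
    (siegelCoord q p / ‖1 + siegelCoord q p‖ ^ (2 * k)).re =
      q p.1 / (p.2 ^ 2 + (1 + q p.1) ^ 2) ^ k := by
  rw [← Complex.ofReal_pow, Complex.div_ofReal_re, pow_mul, norm_one_add_siegelCoord_sq,
    siegelCoord_re]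

end SiegelCoord

section Integrability

variable {E : Type*} [NormedAddCommGroup E] {q : E → ℝ}

theorem siegelCoord_re_nonneg (hle : ∀ z, ‖z‖ ^ 2 ≤ q z) (p : E × ℝ) :
    0 ≤ (siegelCoord q p).re := by
  rw [siegelCoord_re]
  exact (sq_nonneg ‖p.1‖).trans (hle p.1)

theorem norm_one_add_siegelCoord_rpow_le (hle : ∀ z, ‖z‖ ^ 2 ≤ q z) {a b : ℝ} (ha : 0 ≤ a)
    (hb : 0 ≤ b) (p : E × ℝ) :
    ‖1 + siegelCoord q p‖ ^ (-(a / 2 + b)) ≤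
      (1 + ‖p.1‖ ^ 2) ^ (-a / 2) * (1 + ‖p.2‖ ^ 2) ^ (-b / 2) := by
  have hnorm := norm_one_add_siegelCoord_sq q p
  have hq : 1 + ‖p.1‖ ^ 2 ≤ 1 + q p.1 := by gcongr; exact hle p.1
  have hz : 1 + ‖p.1‖ ^ 2 ≤ ‖1 + siegelCoord q p‖ :=
    hq.trans <| by simpa using Complex.re_le_norm (1 + siegelCoord q p)
  have hpos : 0 < ‖1 + siegelCoord q p‖ := lt_of_lt_of_le (by positivity) hz
  have hτ : 1 + ‖p.2‖ ^ 2 ≤ ‖1 + siegelCoord q p‖ ^ 2 := by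
    rw [hnorm, Real.norm_eq_abs, sq_abs]
    nlinarith [sq_nonneg ‖p.1‖]
  calc ‖1 + siegelCoord q p‖ ^ (-(a / 2 + b))
      = ‖1 + siegelCoord q p‖ ^ (-a / 2) * (‖1 + siegelCoord q p‖ ^ 2) ^ (-b / 2) := by
        rw [← rpow_natCast_mul hpos.le, ← rpow_add hpos]
        congr 1
        push_cast
        ring
    _ ≤ (1 + ‖p.1‖ ^ 2) ^ (-a / 2) * (1 + ‖p.2‖ ^ 2) ^ (-b / 2) :=
        mul_le_mul (rpow_le_rpow_of_nonpos (by positivity) hz (by linarith))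
          (rpow_le_rpow_of_nonpos (by positivity) hτ (by linarith)) (by positivity) (by positivity)

variable [NormedSpace ℝ E] [FiniteDimensional ℝ E] [MeasurableSpace E] [BorelSpace E]
  (μ : Measure E) [μ.IsAddHaarMeasure]

-- The threshold for `m`: when `q z = ‖z‖²`, the coordinate has degree two for the dilations
-- `(z, τ) ↦ (λz, λ²τ)`, for which `E × ℝ` has homogeneous dimension `dim E + 2`.
theorem integrable_norm_one_add_siegelCoord_rpow (hq : Measurable q) (hle : ∀ z, ‖z‖ ^ 2 ≤ q z)
    {m : ℝ} (hm : Module.finrank ℝ E + 2 < 2 * m) :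
    Integrable (fun p : E × ℝ => ‖1 + siegelCoord q p‖ ^ (-m)) (μ.prod volume) := by
  obtain ⟨a, b, ha, hb, rfl⟩ :
      ∃ a b : ℝ, Module.finrank ℝ E < a ∧ Module.finrank ℝ ℝ < b ∧ a / 2 + b = m := by
    obtain ⟨a, ha, ham⟩ := exists_between (lt_sub_iff_add_lt.2 hm)
    exact ⟨a, m - a / 2, ha, by rw [Module.finrank_self]; push_cast; linarith, by ring⟩
  refine ((integrable_rpow_neg_one_add_norm_sq (μ := μ) ha).mul_prod
    (integrable_rpow_neg_one_add_norm_sq hb)).mono' ?_ (.of_forall fun p => ?_)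
  · have := measurable_siegelCoord hq
    exact Measurable.aestronglyMeasurable (by fun_prop)
  · rw [Real.norm_of_nonneg (by positivity)]
    exact norm_one_add_siegelCoord_rpow_le hle ((Nat.cast_nonneg _).trans ha.le)
      ((Nat.cast_nonneg _).trans hb.le) p

theorem integrable_siegelCoord_div_norm_pow (hq : Measurable q) (hle : ∀ z, ‖z‖ ^ 2 ≤ q z)
    {k : ℕ} (hk : Module.finrank ℝ E + 4 < 2 * k) :
    Integrable (fun p : E × ℝ => siegelCoord q p / ‖1 + siegelCoord q p‖ ^ k)
      (μ.prod volume) := by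
  have hk' : (Module.finrank ℝ E : ℝ) + 4 < 2 * k := by exact_mod_cast hk
  have hm : (Module.finrank ℝ E : ℝ) + 2 < 2 * (k - 1) := by linarith
  refine (integrable_norm_one_add_siegelCoord_rpow μ hq hle hm).mono' ?_ (.of_forall fun p => ?_)
  · have := measurable_siegelCoord hq
    exact Measurable.aestronglyMeasurable (by fun_prop)
  · rw [neg_sub]
    exact norm_div_norm_one_add_pow_le (siegelCoord_re_nonneg hle p) k

theorem stmt_13_general (hq : Measurable q) (hle : ∀ z, ‖z‖ ^ 2 ≤ q z) {k : ℕ}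
    (hk : Module.finrank ℝ E + 4 < 4 * k) :
    (∀ ε : ℝ, Integrable (fun p : E × ℝ =>
        (ε ^ 2 * (q p.1 ^ 2 + p.2 ^ 2) + q p.1) /
          (((1 + ε ^ 2 * q p.1) ^ 2 + ε ^ 4 * p.2 ^ 2) * (p.2 ^ 2 + (1 + q p.1) ^ 2) ^ k))
        (μ.prod volume)) ∧
    Tendsto (fun ε : ℝ => ∫ p : E × ℝ,
        (ε ^ 2 * (q p.1 ^ 2 + p.2 ^ 2) + q p.1) /
          (((1 + ε ^ 2 * q p.1) ^ 2 + ε ^ 4 * p.2 ^ 2) * (p.2 ^ 2 + (1 + q p.1) ^ 2) ^ k)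
        ∂μ.prod volume)
      (𝓝 0) (𝓝 (∫ p : E × ℝ, q p.1 / (p.2 ^ 2 + (1 + q p.1) ^ 2) ^ k ∂μ.prod volume)) := by
  have hw : AEStronglyMeasurable (siegelCoord q) (μ.prod volume) :=
    (measurable_siegelCoord hq).aestronglyMeasurable
  have hre : ∀ᵐ p ∂μ.prod volume, 0 ≤ (siegelCoord q p).re :=
    .of_forall (siegelCoord_re_nonneg hle)
  have hG := integrable_siegelCoord_div_norm_pow μ hq hle (k := 2 * k) (by omega)
  have hGε (ε : ℝ) := integrable_div_one_add_mul hw hre hG (sq_nonneg ε)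
  have hsq : Tendsto (fun ε : ℝ => ε ^ 2) (𝓝 0) (𝓝[≥] 0) :=
    tendsto_nhdsWithin_iff.2 ⟨(continuous_pow 2).tendsto' 0 0 (by norm_num),
      .of_forall sq_nonneg⟩
  have hlim := (tendsto_integral_div_one_add_mul hw hre hG).comp hsq
  simp_rw [← re_siegelCoord_div_norm_pow_div, ← re_siegelCoord_div_norm_pow]
  refine ⟨fun ε => (hGε ε).re, ?_⟩
  convert (Complex.continuous_re.tendsto _).comp hlim using 2 with ε
  · exact integral_re (hGε ε)
  · exact integral_re hG

end Integrability

section ComplexSpace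

variable {n : ℕ}

theorem measurable_normSq : Measurable (normSq : (Fin n → ℂ) → ℝ) := by
  unfold normSq
  fun_prop

theorem norm_sq_le_normSq (z : Fin n → ℂ) : ‖z‖ ^ 2 ≤ normSq z := by
  have hnonneg : 0 ≤ normSq z := Finset.sum_nonneg fun i _ => sq_nonneg ‖z i‖
  rw [← Real.le_sqrt (norm_nonneg z) hnonneg, pi_norm_le_iff_of_nonneg (sqrt_nonneg _)]
  intro i
  exact le_sqrt_of_sq_le <| Finset.single_le_sum (f := fun j => ‖z j‖ ^ 2)
    (fun j _ => sq_nonneg ‖z j‖) (Finset.mem_univ i)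

end ComplexSpace

theorem stmt_13 (n : ℕ) (hn : 2 ≤ n) :
    (∀ ε ∈ Ioo (0 : ℝ) 1, Integrable (fun p : (Fin n → ℂ) × ℝ =>
        (ε ^ 2 * (normSq p.1 ^ 2 + p.2 ^ 2) + normSq p.1) /
          (((1 + ε ^ 2 * normSq p.1) ^ 2 + ε ^ 4 * p.2 ^ 2) *
            (p.2 ^ 2 + (1 + normSq p.1) ^ 2) ^ (n + 1)))) ∧
    Tendsto (fun ε : ℝ =>
        ∫ p : (Fin n → ℂ) × ℝ,
          (ε ^ 2 * (normSq p.1 ^ 2 + p.2 ^ 2) + normSq p.1) /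
            (((1 + ε ^ 2 * normSq p.1) ^ 2 + ε ^ 4 * p.2 ^ 2) *
              (p.2 ^ 2 + (1 + normSq p.1) ^ 2) ^ (n + 1)))
      (nhdsWithin 0 (Ioi 0))
      (nhds (∫ p : (Fin n → ℂ) × ℝ,
          normSq p.1 / (p.2 ^ 2 + (1 + normSq p.1) ^ 2) ^ (n + 1))) := by
  have hdim : Module.finrank ℝ (Fin n → ℂ) + 4 < 4 * (n + 1) := by
    rw [finrank_real_of_complex, Module.finrank_fin_fun]
    omega
  obtain ⟨hint, hlim⟩ := stmt_13_general volume measurable_normSq norm_sq_le_normSq hdim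
  exact ⟨fun ε _ => hint ε, hlim.mono_left nhdsWithin_le_nhds⟩
end
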